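/- arXiv:1308.3055 — 7 statements merged into one kernel-verified Lean document; each statement's English description precedes it below -/
import Mathlib

section
/- Let K be a (nontrivial) commutative integral domain, n a natural number, and a an n×n matrix over K. Let ã denote the K-linear endomorphism of the K-module of n×n matrices over K given by left multiplication x ↦ a·x. Then the characteristic polynomial of the linear map ã equals the n-th power of the characteristic polynomial of the matrix a: charpoly(ã) = (charpoly(a))^n. -/
/-!
Left multiplication by `a` acts on each column of a matrix separately, as `a` itself. In the basis
of matrix units it is therefore represented by a block diagonal matrix with one block equal to `a`
for each column, and the characteristic polynomial of a block diagonal matrix is the product of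
those of its blocks.
-/

open Matrix

section ToMatrix

variable {R l m n : Type*}

theorem stdBasis_repr_apply [Semiring R] [Fintype m] [Finite n] (x : Matrix m n R) (i : m) (j : n) :
    (stdBasis R m n).repr x (i, j) = x i j := by
  simp [stdBasis, Pi.basis_repr]

theorem toMatrix_mulLeftLinearMap_stdBasis [CommSemiring R] [Fintype l] [Fintype m] [Fintype n]
    [DecidableEq m] [DecidableEq n] (a : Matrix l m R) :
    LinearMap.toMatrix (stdBasis R m n) (stdBasis R l n) (mulLeftLinearMap n R a) =
      blockDiagonal fun _ : n => a := by
  ext ⟨i, k⟩ ⟨j, k'⟩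
  rw [LinearMap.toMatrix_apply, stdBasis_repr_apply, mulLeftLinearMap_apply, stdBasis_eq_single,
    blockDiagonal_apply]
  by_cases h : k = k' <;> simp [h]

end ToMatrix

section BlockDiagonal

variable {R m o : Type*} [CommRing R] [Fintype m] [DecidableEq m] [Fintype o] [DecidableEq o]

theorem charmatrix_blockDiagonal (M : o → Matrix m m R) :
    (blockDiagonal M).charmatrix = blockDiagonal fun k => (M k).charmatrix := by
  ext1 ⟨i, k⟩ ⟨j, k'⟩
  by_cases hk : k = k' <;> by_cases hij : i = j <;> simp [blockDiagonal_apply, hk, hij]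

theorem charpoly_blockDiagonal (M : o → Matrix m m R) :
    (blockDiagonal M).charpoly = ∏ k, (M k).charpoly := by
  simp only [Matrix.charpoly, charmatrix_blockDiagonal, det_blockDiagonal]

end BlockDiagonal

theorem stmt1_general {R m n : Type*} [CommRing R] [Fintype m] [DecidableEq m] [Fintype n]
    (a : Matrix m m R) :
    (mulLeftLinearMap n R a : Matrix m n R →ₗ[R] Matrix m n R).charpoly =
      a.charpoly ^ Fintype.card n := by
  classical
  rw [← LinearMap.charpoly_toMatrix _ (stdBasis R m n), toMatrix_mulLeftLinearMap_stdBasis,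
    charpoly_blockDiagonal, Finset.prod_const, Finset.card_univ]

/-- Over a (nontrivial) commutative integral domain `K`, the characteristic polynomial
of the left-multiplication operator `ã : x ↦ a * x` on `n × n` matrices equals the `n`-th
power of the characteristic polynomial of the matrix `a`. -/
theorem stmt1 (K : Type*) [CommRing K] [IsDomain K] (n : ℕ)
    (a : Matrix (Fin n) (Fin n) K) :
    (LinearMap.mulLeft K a).charpoly = a.charpoly ^ n := by
  rw [← mulLeftLinearMap_eq_mulLeft, stmt1_general, Fintype.card_fin]
end

section
/- Let F be a field of characteristic p > 0, let a be an n×n matrix over F with characteristic polynomial charpoly(a) = ∑_i α_i λ^i, and let q̄ = p^m be any power of p. Then the characteristic polynomial of the matrix a^q̄ is ∑_i α_i^q̄ λ^i; that is, for every i, the i-th coefficient of charpoly(a^(p^m)) equals the (p^m)-th power of the i-th coefficient of charpoly(a). -/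
/-!
Write `q = p ^ m`. The scalar matrix `X` commutes with `a`, so the Frobenius identity for commuting
elements gives `(X - a) ^ q = X ^ q - a ^ q`. Taking determinants, the characteristic polynomial
of `a ^ q` evaluated at `X ^ q` is `charpoly a ^ q = ∑ αᵢ ^ q X ^ (q i)`. The substitution
`X ↦ X ^ q` is injective on polynomials, so `charpoly (a ^ q) = ∑ αᵢ ^ q X ^ i`.
-/

section ExpChar

open Polynomial

variable {R ι : Type*} [CommRing R] [Fintype ι] [DecidableEq ι] (p : ℕ) [ExpChar R p]

theorem charmatrix_pow_expChar_pow (a : Matrix ι ι R) (m : ℕ) :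
    a.charmatrix ^ p ^ m = (expand R (p ^ m)).mapMatrix (a ^ p ^ m).charmatrix := by
  cases isEmpty_or_nonempty ι
  · exact Subsingleton.elim _ _
  have : ExpChar (Matrix ι ι R[X]) p :=
    expChar_of_injective_ringHom (f := (Matrix.scalar ι).comp C)
      (fun _ _ h ↦ C_injective (Matrix.scalar_inj.mp h)) p
  have hcomm : Commute (Matrix.scalar ι (X : R[X])) (C.mapMatrix a) :=
    Matrix.scalar_commute X (Commute.all X) _
  have hX : (expand R (p ^ m)).mapMatrix (Matrix.scalar ι X) = Matrix.scalar ι X ^ p ^ m := by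
    simp [Matrix.diagonal_map, Matrix.diagonal_pow, Pi.pow_def]
  have hC : (expand R (p ^ m)).mapMatrix (C.mapMatrix (a ^ p ^ m)) = C.mapMatrix a ^ p ^ m := by
    rw [← map_pow]
    ext1 i j
    exact expand_C _ _
  rw [Matrix.charmatrix, Matrix.charmatrix, sub_pow_expChar_pow_of_commute _ _ hcomm, map_sub,
    hX, hC]

theorem expand_charpoly_pow_expChar_pow (a : Matrix ι ι R) (m : ℕ) :
    expand R (p ^ m) (a ^ p ^ m).charpoly = a.charpoly ^ p ^ m := by
  rw [Matrix.charpoly, Matrix.charpoly, AlgHom.map_det, ← charmatrix_pow_expChar_pow,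
    Matrix.det_pow]

theorem charpoly_pow_expChar_pow (a : Matrix ι ι R) (m : ℕ) :
    (a ^ p ^ m).charpoly = a.charpoly.map (iterateFrobenius R p m) := by
  apply expand_injective (pow_pos (expChar_pos R p) m)
  rw [expand_charpoly_pow_expChar_pow, ← map_expand, map_iterateFrobenius_expand]

theorem stmt2_general (a : Matrix ι ι R) (m i : ℕ) :
    (a ^ p ^ m).charpoly.coeff i = a.charpoly.coeff i ^ p ^ m := by
  rw [charpoly_pow_expChar_pow, coeff_map, iterateFrobenius_def]

end ExpChar

/-- Over a field `F` of characteristic `p > 0`, if `charpoly a = ∑ αᵢ λ^i`, then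
`charpoly (a ^ p^m) = ∑ αᵢ^(p^m) λ^i`: each coefficient of the characteristic polynomial
of `a ^ q̄` is the `q̄`-th power of the corresponding coefficient of `charpoly a`,
where `q̄ = p^m`. -/
theorem stmt2 (F : Type*) [Field F] (p : ℕ) [Fact p.Prime] [CharP F p]
    (n m : ℕ) (a : Matrix (Fin n) (Fin n) F) (i : ℕ) :
    (Matrix.charpoly (a ^ p ^ m)).coeff i = ((Matrix.charpoly a).coeff i) ^ p ^ m :=
  stmt2_general p a m i
end

section
/- Let F be a field of characteristic p > 0, and let n, m be natural numbers with n ≤ p^m. Then for every n×n matrix a over F, the F-linear endomorphism of F^n determined by the matrix a^(p^m) is semisimple: every subspace of F^n invariant under this endomorphism has an invariant complement. -/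
/-!
Let `q = p ^ m`. An element of an `F`-algebra has separable minimal polynomial as soon as it is a
root of some separable polynomial, and `x ^ q` is a root of `Q` when `minpoly F x ∣ Q (X ^ q)`.
So it is enough to see that every nonzero `f` of degree at most `q` divides `Q (X ^ q)` for some
separable `Q`.

For a power `f = r ^ e`, `e > 0`, of an irreducible `r`, write `r = g (X ^ (p ^ k))` with `g`
separable. Comparing degrees gives `e * p ^ k ≤ p ^ m`, so `k ≤ m` and `e ≤ p ^ (m - k)`, and `f`
divides `r ^ p ^ (m - k) = G (X ^ q)`, where `G` arises from `g` by raising the coefficients to the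
power `p ^ (m - k)` and is again separable. Coprime factors are combined by means of least common
multiples.
-/

section SeparableMultiple

open Polynomial

theorem expand_map_iterateFrobenius_eq_pow {R : Type*} [CommSemiring R] (p : ℕ) [ExpChar R p]
    (g : R[X]) (k j : ℕ) :
    expand R (p ^ (k + j)) (g.map (iterateFrobenius R p j)) = expand R (p ^ k) g ^ p ^ j := by
  rw [pow_add, expand_mul, ← map_expand, map_iterateFrobenius_expand, map_pow]

variable {F : Type*} [Field F]

theorem separable_lcm [DecidableEq F[X]] {f g : F[X]} (hf : f.Separable) (hg : g.Separable) :
    (EuclideanDomain.lcm f g).Separable := by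
  obtain ⟨d, hd⟩ := EuclideanDomain.gcd_dvd_right f g
  have gcd_ne_zero : EuclideanDomain.gcd f g ≠ 0 := (separable_gcd_left hf g).ne_zero
  have lcm_eq : EuclideanDomain.lcm f g = f * d := by
    refine mul_left_cancel₀ gcd_ne_zero ?_
    rw [EuclideanDomain.gcd_mul_lcm, mul_left_comm, ← hd]
  have gcd_coprime_d : IsCoprime (EuclideanDomain.gcd f g) d := Separable.isCoprime (hd ▸ hg)
  have d_dvd_g : d ∣ g := Dvd.intro_left _ hd.symm
  have f_coprime_d : IsCoprime f d := by
    rw [← EuclideanDomain.gcd_isUnit_iff]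
    have gcd_dvd_f := EuclideanDomain.gcd_dvd_left f d
    have gcd_dvd_d := EuclideanDomain.gcd_dvd_right f d
    exact gcd_coprime_d.isUnit_of_dvd'
      (EuclideanDomain.dvd_gcd gcd_dvd_f (gcd_dvd_d.trans d_dvd_g)) gcd_dvd_d
  rw [lcm_eq]
  exact hf.mul (hg.of_dvd d_dvd_g) f_coprime_d

variable (p : ℕ) [Fact p.Prime] [CharP F p] (m : ℕ)

theorem exists_separable_pow_dvd_expand_of_irreducible {f : F[X]} (hf : Irreducible f) (e : ℕ)
    (hdeg : (f ^ e).natDegree ≤ p ^ m) :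
    ∃ Q : F[X], Q.Separable ∧ f ^ e ∣ expand F (p ^ m) Q := by
  have hp : p.Prime := Fact.out
  obtain rfl | he := Nat.eq_zero_or_pos e
  · exact ⟨1, separable_one, by simp⟩
  obtain ⟨k, g, hg, rfl⟩ := exists_separable_of_irreducible p hf hp.ne_zero
  have mul_le : e * p ^ k ≤ p ^ m := by
    rw [natDegree_pow, natDegree_expand] at hdeg
    have g_pos : 0 < g.natDegree :=
      Nat.pos_of_mul_pos_right (natDegree_expand (p ^ k) g ▸ hf.natDegree_pos)
    exact (Nat.mul_le_mul_left e (Nat.le_mul_of_pos_left _ g_pos)).trans hdeg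
  have k_le_m : k ≤ m :=
    (Nat.pow_le_pow_iff_right hp.one_lt).1 ((Nat.le_mul_of_pos_left _ he).trans mul_le)
  obtain ⟨j, rfl⟩ := Nat.exists_eq_add_of_le k_le_m
  have e_le : e ≤ p ^ j := by
    rw [pow_add, mul_comm (p ^ k)] at mul_le
    exact Nat.le_of_mul_le_mul_right mul_le (pow_pos hp.pos k)
  refine ⟨g.map (iterateFrobenius F p j), hg.map, ?_⟩
  rw [expand_map_iterateFrobenius_eq_pow]
  exact pow_dvd_pow _ e_le

theorem exists_separable_dvd_expand {f : F[X]} (hf : f ≠ 0) (hdeg : f.natDegree ≤ p ^ m) :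
    ∃ Q : F[X], Q.Separable ∧ f ∣ expand F (p ^ m) Q := by
  induction f using UniqueFactorizationMonoid.induction_on_coprime with
  | h0 => exact absurd rfl hf
  | h1 hunit => exact ⟨1, separable_one, hunit.dvd⟩
  | hpr e hprime =>
    exact exists_separable_pow_dvd_expand_of_irreducible p m hprime.irreducible e hdeg
  | @hcp f g hfg ihf ihg =>
    classical
    have hf₀ : f ≠ 0 := left_ne_zero_of_mul hf
    have hg₀ : g ≠ 0 := right_ne_zero_of_mul hf
    rw [natDegree_mul hf₀ hg₀] at hdeg
    obtain ⟨A, hA, hfA⟩ := ihf hf₀ (by lia)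
    obtain ⟨B, hB, hgB⟩ := ihg hg₀ (by lia)
    refine ⟨EuclideanDomain.lcm A B, separable_lcm hA hB, hfg.mul_dvd ?_ ?_⟩
    · exact hfA.trans (_root_.map_dvd _ (EuclideanDomain.dvd_lcm_left A B))
    · exact hgB.trans (_root_.map_dvd _ (EuclideanDomain.dvd_lcm_right A B))

end SeparableMultiple

theorem isSeparable_pow_of_natDegree_minpoly_le {F A : Type*} [Field F] [Ring A] [Algebra F A]
    (p : ℕ) [Fact p.Prime] [CharP F p] (m : ℕ) {x : A} (hx : IsIntegral F x)
    (hdeg : (minpoly F x).natDegree ≤ p ^ m) : IsSeparable F (x ^ p ^ m) := by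
  obtain ⟨Q, hQ, hdvd⟩ := exists_separable_dvd_expand p m (minpoly.ne_zero hx) hdeg
  have root : Polynomial.aeval (x ^ p ^ m) Q = 0 := by
    rw [← Polynomial.expand_aeval]
    exact minpoly.dvd_iff.1 hdvd
  exact hQ.of_dvd (minpoly.dvd F _ root)

section Endomorphism

variable {F V : Type*} [Field F] [AddCommGroup V] [Module F V]

theorem isSemisimple_of_isSeparable {f : Module.End F V} (hf : IsSeparable F f) :
    f.IsSemisimple :=
  Module.End.isSemisimple_of_squarefree_aeval_eq_zero hf.squarefree (minpoly.aeval F f)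

theorem natDegree_minpoly_le_finrank [FiniteDimensional F V] (f : Module.End F V) :
    (minpoly F f).natDegree ≤ Module.finrank F V :=
  f.charpoly_natDegree ▸
    Polynomial.natDegree_le_of_dvd f.minpoly_dvd_charpoly f.charpoly_monic.ne_zero

theorem stmt5_general (p : ℕ) [Fact p.Prime] [CharP F p] (m : ℕ) {f : Module.End F V}
    (hf : IsIntegral F f) (hdeg : (minpoly F f).natDegree ≤ p ^ m) :
    (f ^ p ^ m).IsSemisimple :=
  isSemisimple_of_isSeparable (isSeparable_pow_of_natDegree_minpoly_le p m hf hdeg)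

end Endomorphism

/-- Over a field `F` of characteristic `p > 0`, if `n ≤ p^m`, then for every `n × n` matrix
`a` over `F` the linear endomorphism of `F^n` determined by `a ^ p^m` is semisimple: every
invariant subspace has an invariant complement. -/
theorem stmt5 (F : Type*) [Field F] (p : ℕ) [Fact p.Prime] [CharP F p]
    (n m : ℕ) (h : n ≤ p ^ m) (a : Matrix (Fin n) (Fin n) F) :
    Module.End.IsSemisimple (Matrix.toLin' (a ^ p ^ m)) := by
  rw [Matrix.toLin'_pow]
  exact stmt5_general p m (Algebra.IsIntegral.isIntegral _)
    ((natDegree_minpoly_le_finrank _).trans (by rwa [Module.finrank_fin_fun]))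
end

section
/- Let C be a commutative ring, z ∈ C, and f : M → N a C-linear map of C-modules. Suppose M has z-torsion index at most k, i.e., for all a ∈ M and all j, z^(k+j) • a = 0 implies z^k • a = 0. Let S be the multiplicative submonoid of C generated by z, and suppose the induced map of localized modules f' : S⁻¹M → S⁻¹N is injective. Then the restriction of f to z^k·M is injective: for every a ∈ M, if f(z^k • a) = 0 then z^k • a = 0. -/
section Localization

variable {R M N M' N' : Type*} [CommSemiring R]
  [AddCommMonoid M] [Module R M] [AddCommMonoid N] [Module R N]
  [AddCommMonoid M'] [Module R M'] [AddCommMonoid N'] [Module R N']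

theorem exists_smul_eq_zero_of_localizedMap_injective (S : Submonoid R)
    (g : M →ₗ[R] M') [IsLocalizedModule S g] (g' : N →ₗ[R] N') [IsLocalizedModule S g']
    {f : M →ₗ[R] N} (hf : Function.Injective (IsLocalizedModule.map S g g' f))
    {m : M} (hm : f m = 0) : ∃ s : S, s • m = 0 := by
  have map_eq_zero : IsLocalizedModule.map S g g' f (g m) = 0 := by
    rw [IsLocalizedModule.map_apply, hm, map_zero]
  exact (IsLocalizedModule.eq_zero_iff S g).mp ((map_eq_zero_iff _ hf).mp map_eq_zero)

/-- The module `M` has `z`-torsion index at most `k`: every element killed by some `z ^ (k + j)`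
is already killed by `z ^ k`. -/
def HasTorsionIndexLE (M : Type*) [AddCommMonoid M] [Module R M] (z : R) (k : ℕ) : Prop :=
  ∀ (a : M) (j : ℕ), z ^ (k + j) • a = 0 → z ^ k • a = 0

theorem HasTorsionIndexLE.pow_smul_eq_zero {z : R} {k : ℕ} (h : HasTorsionIndexLE M z k)
    {j : ℕ} {a : M} (ha : z ^ j • a = 0) : z ^ k • a = 0 :=
  h a j <| by rw [pow_add, mul_smul, ha, smul_zero]

theorem stmt9_general {z : R} {k : ℕ} (hM : HasTorsionIndexLE M z k)
    (g : M →ₗ[R] M') [IsLocalizedModule (Submonoid.powers z) g]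
    (g' : N →ₗ[R] N') [IsLocalizedModule (Submonoid.powers z) g'] {f : M →ₗ[R] N}
    (hf : Function.Injective (IsLocalizedModule.map (Submonoid.powers z) g g' f))
    {j : ℕ} {a : M} (ha : f (z ^ j • a) = 0) : z ^ k • a = 0 := by
  obtain ⟨⟨_, i, rfl⟩, (hi : z ^ i • z ^ j • a = 0)⟩ :=
    exists_smul_eq_zero_of_localizedMap_injective (Submonoid.powers z) g g' hf ha
  rw [← mul_smul, ← pow_add] at hi
  exact hM.pow_smul_eq_zero hi

end Localization

/-- Suppose `M` has `z`-torsion index at most `k`, and the induced map on localizations at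
the powers of `z` is injective. Then the restriction of `f` to `z^k·M` is injective:
`f (z^k • a) = 0` implies `z^k • a = 0`. -/
theorem stmt9 (C : Type*) [CommRing C] (M N : Type*) [AddCommGroup M] [Module C M]
    [AddCommGroup N] [Module C N] (z : C) (k : ℕ) (f : M →ₗ[C] N)
    (htor : ∀ (a : M) (j : ℕ), z ^ (k + j) • a = 0 → z ^ k • a = 0)
    (hinj : Function.Injective (LocalizedModule.map (Submonoid.powers z) f)) :
    ∀ a : M, f (z ^ k • a) = 0 → z ^ k • a = 0 :=
  fun _ ↦ stmt9_general htor (LocalizedModule.mkLinearMap _ M) (LocalizedModule.mkLinearMap _ N)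
    hinj
end

section
/- Let C be a commutative ring, z ∈ C, and f : M → N a C-linear map of C-modules. Suppose M has z-torsion index at most k, i.e., for all a ∈ M and all j, z^(k+j) • a = 0 implies z^k • a = 0. Suppose the induced map M/z^k·M → N/z^k·N is injective (explicitly: for every a ∈ M, f(a) ∈ z^k·N implies a ∈ z^k·M), and that the induced map of localized modules f' : S⁻¹M → S⁻¹N is injective, where S is the multiplicative submonoid generated by z. Then f itself is injective. -/
/-! A kernel element `a` of `f` is divisible by `z ^ k`, since `f a = 0` is, and is killed by a
power of `z`, since it vanishes in the localization. The bound on the torsion says precisely that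
`z ^ k • M` contains no nonzero element killed by a power of `z`. -/

section

open scoped Pointwise

variable {R M M' N N' : Type*} [CommSemiring R] [AddCommMonoid M'] [Module R M']
  [AddCommMonoid N] [Module R N] [AddCommMonoid N'] [Module R N'] {S : Submonoid R} {s : R}

section AddCommMonoid

variable [AddCommMonoid M] [Module R M] (g : M →ₗ[R] M') [IsLocalizedModule S g]

theorem ker_le_ker_of_injective_localizedMap (g' : N →ₗ[R] N') [IsLocalizedModule S g']
    {f : M →ₗ[R] N} (hinj : Function.Injective (IsLocalizedModule.map S g g' f)) :
    LinearMap.ker f ≤ LinearMap.ker g :=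
  calc
    LinearMap.ker f ≤ LinearMap.ker (g' ∘ₗ f) := LinearMap.ker_le_ker_comp f g'
    _ = LinearMap.ker (IsLocalizedModule.map S g g' f ∘ₗ g) := by rw [IsLocalizedModule.map_comp]
    _ = LinearMap.ker g := by
      rw [LinearMap.ker_comp, LinearMap.ker_eq_bot_of_injective hinj, Submodule.comap_bot]

theorem disjoint_smul_top_ker_of_mul_smul_eq_zero
    (htor : ∀ a : M, ∀ t ∈ S, (s * t) • a = 0 → s • a = 0) :
    Disjoint (s • ⊤ : Submodule R M) (LinearMap.ker g) := by
  rw [Submodule.disjoint_def]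
  intro a ha_smul ha_ker
  obtain ⟨b, -, rfl⟩ := (Submodule.mem_smul_pointwise_iff_exists a s ⊤).1 ha_smul
  obtain ⟨t, ht, htb⟩ := (IsLocalizedModule.mem_ker_iff S).1 ha_ker
  exact htor b t ht (by rwa [mul_comm, mul_smul])

end AddCommMonoid

theorem stmt10_general [AddCommGroup M] [Module R M] (g : M →ₗ[R] M') [IsLocalizedModule S g]
    (g' : N →ₗ[R] N') [IsLocalizedModule S g'] {f : M →ₗ[R] N}
    (htor : ∀ a : M, ∀ t ∈ S, (s * t) • a = 0 → s • a = 0)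
    (hker : LinearMap.ker f ≤ s • ⊤)
    (hinj : Function.Injective (IsLocalizedModule.map S g g' f)) :
    Function.Injective f := by
  have hbot : LinearMap.ker f ≤ ⊥ :=
    disjoint_smul_top_ker_of_mul_smul_eq_zero g htor hker
      (ker_le_ker_of_injective_localizedMap g g' hinj)
  exact (injective_iff_map_eq_zero f).2 fun _ ha ↦ (Submodule.mem_bot R).1 (hbot ha)

end

/-- Suppose `M` has `z`-torsion index at most `k`, the induced map `M/z^k·M → N/z^k·N` is
injective, and the induced map of modules localized at the powers of `z` is injective.
Then `f` itself is injective. -/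
theorem stmt10 (C : Type*) [CommRing C] (M N : Type*) [AddCommGroup M] [Module C M]
    [AddCommGroup N] [Module C N] (z : C) (k : ℕ) (f : M →ₗ[C] N)
    (htor : ∀ (a : M) (j : ℕ), z ^ (k + j) • a = 0 → z ^ k • a = 0)
    (hquot : ∀ a : M, (∃ c : N, f a = z ^ k • c) → ∃ b : M, a = z ^ k • b)
    (hinj : Function.Injective (LocalizedModule.map (Submonoid.powers z) f)) :
    Function.Injective f := by
  refine stmt10_general _ _ (s := z ^ k) ?_ (fun a ha ↦ ?_) hinj
  · rintro a _ ⟨j, rfl⟩ h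
    exact htor a j (by rwa [pow_add])
  · obtain ⟨b, rfl⟩ := hquot a ⟨0, by rw [LinearMap.mem_ker.1 ha, smul_zero]⟩
    exact Submodule.smul_mem_pointwise_smul b (z ^ k) ⊤ trivial
end

section
/- (Shirshov-type finiteness theorem) Let C be a commutative ring and A a unital associative C-algebra generated as a C-algebra by elements a_1, …, a_ℓ, and suppose A satisfies a proper multilinear identity of degree d. Let M be a (left) A-module and C_1 a commutative C-subalgebra of A such that: (a) for each i, each c ∈ C_1, and each m ∈ M, (a_i·c − c·a_i) • m = 0; and (b) every word w = a_{i_1}⋯a_{i_s} in the generators of length 1 ≤ s ≤ d is integral over C_1 with respect to M, i.e., there exist n ≥ 1 and c_0, …, c_{n−1} ∈ C_1 such that (w^n + c_{n−1}·w^{n−1} + ⋯ + c_1·w + c_0) • m = 0 for all m ∈ M. Then A modulo the annihilator of M is a finitely generated C_1-module: there exist finitely many b_1, …, b_t ∈ A such that for every x ∈ A there are c_1, …, c_t ∈ C_1 with (x − (c_1·b_1 + ⋯ + c_t·b_t)) • m = 0 for all m ∈ M. -/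
/-!
In `A / Ann M` the image of `C₁` is central, because it commutes with the generators. So it suffices
to show that an algebra over a commutative ring `R` which satisfies a proper multilinear identity of
degree `d` and whose short words in finitely many generators are integral over `R` is a finite
module. Order words by length and then lexicographically. If a word has a factor `W₁ ⋯ W_d` such
that every nontrivial permutation of the `W_i` makes it lexicographically smaller, then the identity
expresses the word through smaller ones; if it has a factor `u ^ k` with `u` short and `k` large,
then integrality of `u` expresses it through shorter ones. By Shirshov's lemma every sufficiently
long word has a factor of one of these two kinds, so finitely many words span.

For Shirshov's lemma we follow Belov: in a long word cut into blocks of equal length, some block `v`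
occurs `d` times. Consider the suffixes of `v` starting at its first `d` letters. If none of them is
a prefix of another, sort them decreasingly, locate the `i`-th one in the `i`-th occurrence of `v`
and cut there; this gives `W₁, …, W_d`. Otherwise some suffix of `v` has a period less than `d` and
hence begins with a large power of a short word.
-/

open List

section Words

variable {α : Type*}

/-- The word `x` dominates the word `y` if `y` precedes `x` lexicographically whatever is appended
to the two words. For a linear order on the letters this says that the words differ at some position
and that the first such letter is larger in `x`. -/
def Dominates [LT α] (x y : List α) : Prop :=
  ∀ s t : List α, y ++ s < x ++ t

theorem Dominates.of_prefix [LT α] {x y x' y' : List α} (h : Dominates x y) (hx : x <+: x')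
    (hy : y <+: y') : Dominates x' y' := by
  obtain ⟨p, rfl⟩ := hx
  obtain ⟨q, rfl⟩ := hy
  intro s t
  simpa only [append_assoc] using h (q ++ s) (p ++ t)

theorem dominates_of_lt_of_not_prefix [LT α] {x y : List α} (hlt : y < x) (hpre : ¬ y <+: x) :
    Dominates x y := by
  intro s t
  induction hlt with
  | nil => exact absurd (nil_prefix) hpre
  | rel h => exact Lex.rel h
  | cons _ ih => exact Lex.cons (ih fun h => hpre (cons_prefix_cons.2 ⟨rfl, h⟩))

theorem flatten_lt_flatten_of_perm [LT α] {L L' : List (List α)} (hL : L.Pairwise Dominates)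
    (hperm : L' ~ L) (hne : L' ≠ L) : L'.flatten < L.flatten := by
  induction L generalizing L' with
  | nil => exact absurd hperm.eq_nil hne
  | cons x T ih =>
    obtain ⟨hx, hT⟩ := pairwise_cons.1 hL
    obtain _ | ⟨y, T'⟩ := L'
    · exact absurd hperm.symm.eq_nil (cons_ne_nil x T)
    rw [flatten_cons, flatten_cons]
    by_cases hyx : y = x
    · subst hyx
      exact append_left_lt (ih hT hperm.cons_inv fun h => hne (h ▸ rfl))
    · exact hx y ((mem_cons.1 (hperm.subset mem_cons_self)).resolve_left hyx) _ _

variable [LinearOrder α]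

theorem dominates_of_lt_of_length_eq {x y : List α} (hlt : y < x) (hlen : y.length = x.length) :
    Dominates x y :=
  dominates_of_lt_of_not_prefix hlt fun h => hlt.ne (h.eq_of_length hlen)

theorem not_dominates_self (x : List α) : ¬ Dominates x x := fun h =>
  lt_irrefl _ (h [] [])

theorem flatten_ofFn_comp_perm_lt {d : ℕ} {W : Fin d → List α}
    (hW : (ofFn W).Pairwise Dominates) {σ : Equiv.Perm (Fin d)} (hσ : σ ≠ 1) :
    (ofFn (W ∘ σ)).flatten < (ofFn W).flatten := by
  have hnodup : (ofFn W).Nodup := hW.imp fun {x y} h => by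
    rintro rfl
    exact not_dominates_self x h
  have hinj : Function.Injective W := nodup_ofFn.1 hnodup
  refine flatten_lt_flatten_of_perm hW (σ.ofFn_comp_perm W) fun h => hσ ?_
  exact Equiv.ext fun i => hinj (congrFun (ofFn_injective h) i)

theorem shortlex_append_append {u v : List α} (hlen : u.length = v.length) (hlt : u < v)
    (p r : List α) : Shortlex (· < ·) (p ++ u ++ r) (p ++ v ++ r) := by
  rw [append_assoc, append_assoc]
  refine Shortlex.append_left (Shortlex.of_lex (by simp [hlen]) ?_) p
  exact dominates_of_lt_of_length_eq hlt hlen r r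

end Words

section Combinatorics

variable {α : Type*}

/-- Find the `i`-th word of `us` inside the `i`-th occurrence of `v` and cut where it begins. -/
theorem exists_flatten_eq_append_of_infix {v : List α} {us L : List (List α)}
    (hus : ∀ u ∈ us, u <:+: v) (hL : replicate us.length v <+ L) :
    ∃ P Ws, L.flatten = P ++ flatten Ws ∧ Forall₂ (· <+: ·) us Ws := by
  induction us generalizing L with
  | nil => exact ⟨L.flatten, [], by simp, Forall₂.nil⟩
  | cons u us ih =>
    obtain ⟨L₁, L₂, rfl, hv, hL₂⟩ := cons_sublist_iff.1 hL
    obtain ⟨M₁, M₂, rfl⟩ := append_of_mem hv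
    obtain ⟨P, Ws, hflat, hWs⟩ := ih (fun u' hu' => hus u' (mem_cons_of_mem u hu')) hL₂
    obtain ⟨p, q, rfl⟩ := hus u mem_cons_self
    refine ⟨M₁.flatten ++ p, (u ++ (q ++ M₂.flatten ++ P)) :: Ws, ?_,
      Forall₂.cons (prefix_append _ _) hWs⟩
    simp [hflat]

theorem pairwise_dominates_of_forall₂_prefix [LT α] {us Ws : List (List α)}
    (hus : us.Pairwise Dominates) (h : Forall₂ (· <+: ·) us Ws) : Ws.Pairwise Dominates := by
  obtain ⟨hlen, hpre⟩ := forall₂_iff_get.1 h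
  rw [pairwise_iff_getElem] at hus ⊢
  intro i j hi hj hij
  rw [← hlen] at hi hj
  exact (hus i j hi hj hij).of_prefix (hpre i _ _) (hpre j _ _)

theorem exists_perm_pairwise_dominates [LinearOrder α] {L : List (List α)}
    (hL : L.Pairwise fun x y => ¬ x <+: y ∧ ¬ y <+: x) :
    ∃ L', L' ~ L ∧ L'.Pairwise Dominates := by
  have hperm := perm_insertionSort (· ≥ ·) L
  refine ⟨L.insertionSort (· ≥ ·), hperm, ?_⟩
  have hsorted := pairwise_insertionSort (· ≥ ·) L
  have hincomp := (hperm.pairwise_iff fun h => And.symm h).2 hL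
  refine (hsorted.and hincomp).imp fun {x y} ⟨hge, hxy, hyx⟩ => ?_
  exact dominates_of_lt_of_not_prefix (lt_of_le_of_ne hge fun e => hxy (e ▸ prefix_rfl)) hyx

theorem flatten_replicate_take_prefix {v : List α} {p k : ℕ} (hv : v.HasPeriod p)
    (hk : k * p ≤ v.length) : (replicate k (v.take p)).flatten <+: v := by
  induction k with
  | zero => exact nil_prefix
  | succ k ih =>
    have hk' : k * p ≤ v.length := (Nat.mul_le_mul_right p k.le_succ).trans hk
    have hpre : (replicate (k + 1) (v.take p)).flatten <+: v.take p ++ v := by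
      rw [replicate_succ, flatten_cons, prefix_append_right_inj]
      exact ih hk'
    refine prefix_of_prefix_length_le hpre hv ?_
    rw [length_flatten, map_replicate, sum_replicate, smul_eq_mul, length_take]
    exact (Nat.mul_le_mul_left _ (min_le_left _ _)).trans hk

theorem hasPeriod_of_drop_prefix {v : List α} {p : ℕ} (h : v.drop p <+: v) : v.HasPeriod p := by
  have := (prefix_append_right_inj (v.take p)).2 h
  rwa [take_append_drop] at this

/-- Compare the first `d` suffixes of `v`: if one is a prefix of another, then the latter has a
period less than `d`; otherwise, in decreasing order, they dominate each other. -/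
theorem exists_pairwise_dominates_or_power_infix [LinearOrder α] {d k : ℕ} {v : List α}
    (hv : d + k * d ≤ v.length) :
    (∃ us : List (List α), us.length = d ∧ (∀ u ∈ us, u <:+: v) ∧ us.Pairwise Dominates) ∨
      ∃ u : List α, u ≠ [] ∧ u.length < d ∧ (replicate k u).flatten <:+: v := by
  by_cases hover : ∃ i j, i < j ∧ j < d ∧ v.drop j <+: v.drop i
  · right
    obtain ⟨i, j, hij, hj, hpre⟩ := hover
    obtain ⟨p, rfl⟩ := Nat.exists_eq_add_of_lt hij
    have hper : (v.drop i).HasPeriod (p + 1) := hasPeriod_of_drop_prefix (by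
      rwa [drop_drop, ← add_assoc])
    have hlen : k * (p + 1) ≤ (v.drop i).length := by
      have : k * (p + 1) ≤ k * d := Nat.mul_le_mul_left k (by omega)
      rw [length_drop]; omega
    refine ⟨(v.drop i).take (p + 1), ?_, ?_, ?_⟩
    · rw [← length_pos_iff, length_take, length_drop]; omega
    · rw [length_take]; omega
    · exact (flatten_replicate_take_prefix hper hlen).isInfix.trans (drop_suffix i v).isInfix
  · left
    push Not at hover
    obtain ⟨us, hperm, hdom⟩ := exists_perm_pairwise_dominates (L := (range d).map (v.drop ·)) (by
      rw [pairwise_map]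
      refine (pairwise_lt_range (n := d)).imp_of_mem fun {i j} _ hj hij => ⟨fun h => ?_, ?_⟩
      · have hle := h.length_le
        have hjd := mem_range.1 hj
        simp only [length_drop] at hle
        omega
      · exact hover i j hij (mem_range.1 hj))
    refine ⟨us, by simp [hperm.length_eq], fun u hu => ?_, hdom⟩
    obtain ⟨i, -, rfl⟩ := mem_map.1 (hperm.subset hu)
    exact (drop_suffix i v).isInfix

theorem exists_replicate_sublist_of_card_mul_lt {s : Finset α} {L : List α}
    (hL : ∀ v ∈ L, v ∈ s) {d : ℕ} (hd : s.card * d < L.length) :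
    ∃ v ∈ s, replicate d v <+ L := by
  classical
  obtain ⟨v, hvs, hv⟩ : ∃ v ∈ s, d < L.count v := by
    refine Finset.exists_lt_of_sum_lt ?_
    rw [Finset.sum_const, smul_eq_mul]
    have hsum := Multiset.sum_count_eq_card (m := (L : Multiset α)) hL
    simp only [Multiset.coe_count, Multiset.coe_card] at hsum
    exact hd.trans_eq hsum.symm
  exact ⟨v, hvs, replicate_sublist_iff.2 hv.le⟩

theorem exists_length_forall_replicate_block_sublist (α : Type*) [Finite α] (b d : ℕ) :
    ∃ N, ∀ w : List α, N ≤ w.length → ∃ v : List α, v.length = b ∧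
      ∃ L : List (List α), replicate d v <+ L ∧ L.flatten <+: w := by
  have hfin : {v : List α | v.length = b}.Finite := finite_length_eq α b
  set n := hfin.toFinset.card * d + 1 with hn
  refine ⟨n * b, fun w hw => ?_⟩
  set L := (replicate n b).splitLengths (w.take (n * b))
  have hsum : (replicate n b).sum = (w.take (n * b)).length := by simp [hw]
  have hlen : ∀ v ∈ L, v.length = b := fun v hv => by
    have h := mem_map_of_mem (f := List.length) hv
    rw [map_splitLengths_length _ _ hsum.le] at h
    exact eq_of_mem_replicate h
  obtain ⟨v, hvb, hv⟩ := exists_replicate_sublist_of_card_mul_lt (s := hfin.toFinset) (L := L)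
    (d := d) (fun v hv => hfin.mem_toFinset.2 (hlen v hv)) (by simp [L, hn])
  refine ⟨v, hfin.mem_toFinset.1 hvb, L, hv, ?_⟩
  rw [flatten_splitLengths _ _ hsum.ge]
  exact take_prefix _ _

/-- Shirshov's lemma, with Belov's bound `d` on the length of the repeated word. -/
theorem exists_length_forall_dominating_or_power_infix (α : Type*) [LinearOrder α] [Finite α]
    (d k : ℕ) :
    ∃ N, ∀ w : List α, N ≤ w.length →
      (∃ W : Fin d → List α, (ofFn W).Pairwise Dominates ∧ (ofFn W).flatten <:+: w) ∨
        ∃ u : List α, u ≠ [] ∧ u.length < d ∧ (replicate k u).flatten <:+: w := by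
  obtain ⟨N, hN⟩ := exists_length_forall_replicate_block_sublist α (d + k * d) d
  refine ⟨N, fun w hw => ?_⟩
  obtain ⟨v, hv, L, hvL, hLw⟩ := hN w hw
  rcases exists_pairwise_dominates_or_power_infix hv.ge with
    ⟨us, rfl, hus, hdom⟩ | ⟨u, hne, hud, huv⟩
  · left
    obtain ⟨P, Ws, hflat, hWs⟩ := exists_flatten_eq_append_of_infix hus hvL
    rw [hWs.length_eq]
    refine ⟨Ws.get, ?_, ?_⟩
    · rw [ofFn_get]
      exact pairwise_dominates_of_forall₂_prefix hdom hWs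
    · rw [ofFn_get]
      exact (hflat ▸ suffix_append P _).isInfix.trans hLw.isInfix
  · right
    have hvw : v <:+: w :=
      (infix_of_mem_flatten (hvL.subset (mem_replicate.2 ⟨hud.ne_bot, rfl⟩))).trans hLw.isInfix
    exact ⟨u, hne, hud, huv.trans hvw⟩

end Combinatorics

section Reduction

variable {R A : Type*} [CommRing R] [Ring A] [Algebra R A]

theorem mul_prod_ofFn_mul_mem_of_multilinear_identity {d : ℕ} {c : Equiv.Perm (Fin d) → R}
    (hc1 : c 1 = 1) (hPI : ∀ v : Fin d → A, ∑ σ, c σ • (ofFn (v ∘ σ)).prod = 0)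
    {Q : Submodule R A} {p r : A} {v : Fin d → A}
    (hQ : ∀ σ : Equiv.Perm (Fin d), σ ≠ 1 → p * (ofFn (v ∘ σ)).prod * r ∈ Q) :
    p * (ofFn v).prod * r ∈ Q := by
  have hsum : ∑ σ : Equiv.Perm (Fin d), c σ • (p * (ofFn (v ∘ σ)).prod * r) = 0 := by
    simpa only [Finset.mul_sum, Finset.sum_mul, mul_smul_comm, smul_mul_assoc, mul_zero, zero_mul]
      using congrArg (p * · * r) (hPI v)
  rw [← Finset.add_sum_erase _ _ (Finset.mem_univ 1), hc1, one_smul, Equiv.Perm.coe_one,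
    Function.comp_id] at hsum
  rw [eq_neg_of_add_eq_zero_left hsum]
  exact neg_mem (sum_mem fun σ hσ => Q.smul_mem _ (hQ σ (Finset.ne_of_mem_erase hσ)))

theorem mul_mul_mem_of_mem_span {Q : Submodule R A} {p r y : A} {s : Set A}
    (hy : y ∈ Submodule.span R s) (hQ : ∀ z ∈ s, p * z * r ∈ Q) : p * y * r ∈ Q := by
  have hle : Submodule.span R s ≤ Q.comap (LinearMap.mulLeftRight R (p, r)) :=
    Submodule.span_le.2 hQ
  exact hle hy

theorem exists_pow_mem_span_pow_lt {s : Set A} (hs : s.Finite) (hint : ∀ y ∈ s, IsIntegral R y) :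
    ∃ k : ℕ, ∀ y ∈ s, y ^ k ∈ Submodule.span R ((y ^ ·) '' Set.Iio k) := by
  classical
  refine ((hs.eventually_all (l := Filter.atTop)).2 fun y hy => ?_).exists
  obtain ⟨f, hf, hfy⟩ := hint y hy
  filter_upwards [Filter.eventually_ge_atTop f.natDegree] with k hk
  have hmem : y ^ k ∈ Subalgebra.toSubmodule (Algebra.adjoin R {y}) :=
    pow_mem (Algebra.self_mem_adjoin_singleton R y) k
  rw [← Submodule.span_range_natDegree_eq_adjoin hf hfy] at hmem
  refine Submodule.span_mono ?_ hmem
  rw [Finset.coe_image, Finset.coe_range]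
  exact Set.image_mono (Set.Iio_subset_Iio hk)

variable {ι : Type*} (a : ι → A)

theorem span_range_prod_map_eq_top (hgen : Algebra.adjoin R (Set.range a) = ⊤) :
    Submodule.span R (Set.range fun w : List ι => (w.map a).prod) = ⊤ := by
  have hwords : (Set.range fun w : List ι => (w.map a).prod) =
      Submonoid.closure (Set.range a) := by
    rw [← FreeMonoid.mrange_lift, MonoidHom.coe_mrange]
    exact congrArg Set.range
      (funext fun w => (FreeMonoid.lift_apply a (FreeMonoid.ofList w)).symm)
  rw [hwords, ← Algebra.adjoin_eq_span, hgen, Algebra.top_toSubmodule]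

variable {a} [LinearOrder ι] {Q : Submodule R A}

theorem prod_map_mem_of_dominating_infix {d : ℕ} {c : Equiv.Perm (Fin d) → R} (hc1 : c 1 = 1)
    (hPI : ∀ v : Fin d → A, ∑ σ, c σ • (ofFn (v ∘ σ)).prod = 0)
    {W : Fin d → List ι} (hW : (ofFn W).Pairwise Dominates) {w : List ι}
    (hWw : (ofFn W).flatten <:+: w)
    (hQ : ∀ w', Shortlex (· < ·) w' w → (w'.map a).prod ∈ Q) : (w.map a).prod ∈ Q := by
  obtain ⟨p, r, rfl⟩ := hWw
  have hprod : ∀ V : Fin d → List ι, ((p ++ (ofFn V).flatten ++ r).map a).prod =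
      (p.map a).prod * (ofFn fun i => ((V i).map a).prod).prod * (r.map a).prod := fun V => by
    simp only [map_append, prod_append, map_flatten, prod_flatten, map_ofFn, Function.comp_def]
  rw [hprod]
  refine mul_prod_ofFn_mul_mem_of_multilinear_identity hc1 hPI fun σ hσ => ?_
  have hlen : (ofFn (W ∘ σ)).flatten.length = (ofFn W).flatten.length :=
    (σ.ofFn_comp_perm W).flatten.length_eq
  have hmem := hQ _ (shortlex_append_append hlen (flatten_ofFn_comp_perm_lt hW hσ) p r)
  rwa [hprod] at hmem

theorem prod_map_mem_of_power_infix {u w : List ι} {k : ℕ} (hu : u ≠ [])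
    (huw : (replicate k u).flatten <:+: w)
    (hint : (u.map a).prod ^ k ∈ Submodule.span R (((u.map a).prod ^ ·) '' Set.Iio k))
    (hQ : ∀ w', Shortlex (· < ·) w' w → (w'.map a).prod ∈ Q) : (w.map a).prod ∈ Q := by
  obtain ⟨p, r, rfl⟩ := huw
  have hprod : ∀ j, ((p ++ (replicate j u).flatten ++ r).map a).prod =
      (p.map a).prod * (u.map a).prod ^ j * (r.map a).prod := fun j => by
    simp only [map_append, prod_append, map_flatten, prod_flatten, map_replicate, prod_replicate]
  rw [hprod]
  refine mul_mul_mem_of_mem_span hint ?_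
  rintro _ ⟨j, hj, rfl⟩
  have hlt : j * u.length < k * u.length := Nat.mul_lt_mul_of_pos_right hj (length_pos_iff.2 hu)
  have hmem := hQ (p ++ (replicate j u).flatten ++ r) (Shortlex.of_length_lt (by simpa using hlt))
  rwa [hprod] at hmem

end Reduction

section Finiteness

theorem finite_of_multilinear_identity_of_isIntegral_words {R A ι : Type*} [CommRing R] [Ring A]
    [Algebra R A] [Finite ι] {a : ι → A} (hgen : Algebra.adjoin R (Set.range a) = ⊤)
    {d : ℕ} {c : Equiv.Perm (Fin d) → R} (hc1 : c 1 = 1)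
    (hPI : ∀ v : Fin d → A, ∑ σ, c σ • (ofFn (v ∘ σ)).prod = 0)
    (hint : ∀ u : List ι, u ≠ [] → u.length < d → IsIntegral R (u.map a).prod) :
    Module.Finite R A := by
  let : LinearOrder ι := IsWellOrder.linearOrder WellOrderingRel
  obtain ⟨k, hk⟩ : ∃ k : ℕ, ∀ y ∈ (fun u => (u.map a).prod) '' {u | u ≠ [] ∧ u.length < d},
      y ^ k ∈ Submodule.span R ((y ^ ·) '' Set.Iio k) := by
    refine exists_pow_mem_span_pow_lt
      (((finite_length_lt ι d).subset fun _ hu => hu.2).image _) ?_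
    rintro _ ⟨u, ⟨hne, hud⟩, rfl⟩
    exact hint u hne hud
  obtain ⟨N, hN⟩ := exists_length_forall_dominating_or_power_infix ι d k
  set S := (fun w : List ι => (w.map a).prod) '' {w | w.length < N}
  have hS : S.Finite := (finite_length_lt ι N).image _
  have hword : ∀ w : List ι, (w.map a).prod ∈ Submodule.span R S := fun w => by
    induction w using (Shortlex.wf (α := ι) wellFounded_lt).induction with
    | h w ih =>
      rcases lt_or_ge w.length N with hw | hw
      · exact Submodule.subset_span ⟨w, hw, rfl⟩
      · rcases hN w hw with ⟨W, hW, hWw⟩ | ⟨u, hne, hud, huw⟩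
        · exact prod_map_mem_of_dominating_infix hc1 hPI hW hWw ih
        · exact prod_map_mem_of_power_infix hne huw (hk _ ⟨u, ⟨hne, hud⟩, rfl⟩) ih
  refine ⟨Submodule.fg_def.2 ⟨S, hS, top_le_iff.1 ?_⟩⟩
  rw [← span_range_prod_map_eq_top a hgen, Submodule.span_le]
  rintro _ ⟨w, rfl⟩
  exact hword w

open Polynomial in
theorem isIntegral_of_pow_add_sum_eq_zero {R A : Type*} [CommRing R] [Ring A] [Algebra R A] {y : A}
    {n : ℕ} {co : Fin n → R} (h : y ^ n + ∑ j, co j • y ^ (j : ℕ) = 0) : IsIntegral R y := by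
  refine ⟨X ^ n + ∑ j : Fin n, Polynomial.C (co j) * X ^ (j : ℕ),
    monic_X_pow_add (degree_sum_fin_lt co), ?_⟩
  rw [← aeval_def, map_add, map_pow, aeval_X, map_sum, ← h]
  simp only [map_mul, map_pow, aeval_C, aeval_X, Algebra.smul_def]

theorem exists_sum_mul_eq_of_le_center {C B ι : Type*} [CommRing C] [Ring B] [Algebra C B]
    [Finite ι] {a : ι → B} (hgen : Algebra.adjoin C (Set.range a) = ⊤)
    {d : ℕ} {c : Equiv.Perm (Fin d) → C} (hc1 : c 1 = 1)
    (hPI : ∀ v : Fin d → B, ∑ σ, c σ • (ofFn (v ∘ σ)).prod = 0)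
    {Z : Subalgebra C B} (hZ : Z ≤ Subalgebra.center C B)
    (hint : ∀ u : List ι, u ≠ [] → u.length < d → ∃ (n : ℕ) (co : Fin n → B), (∀ j, co j ∈ Z) ∧
      (u.map a).prod ^ n + ∑ j, co j * (u.map a).prod ^ (j : ℕ) = 0) :
    ∃ (t : ℕ) (b : Fin t → B), ∀ x : B, ∃ cc : Fin t → B,
      (∀ j, cc j ∈ Z) ∧ x = ∑ j, cc j * b j := by
  -- `D` is `Z`, placed inside the centre so that it is a commutative ring over which `B` is an
  -- algebra.
  let D : Subring (Subring.center B) := Z.toSubring.comap (Subring.center B).subtype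
  let : Algebra C D := (((algebraMap C B).codRestrict (Subring.center B)
    Set.algebraMap_mem_center).codRestrict D Z.algebraMap_mem).toAlgebra
  have : IsScalarTower C D B := .of_algebraMap_eq fun _ => rfl
  have hgenD : Algebra.adjoin D (Set.range a) = ⊤ := by
    rw [← Algebra.adjoin_adjoin_of_tower C, hgen, Algebra.coe_top, Algebra.adjoin_univ]
  have hPID : ∀ v : Fin d → B, ∑ σ, algebraMap C D (c σ) • (ofFn (v ∘ σ)).prod = 0 := fun v => by
    simpa only [algebraMap_smul] using hPI v
  have hintD : ∀ u : List ι, u ≠ [] → u.length < d → IsIntegral D (u.map a).prod := by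
    intro u hne hud
    obtain ⟨n, co, hco, h⟩ := hint u hne hud
    exact isIntegral_of_pow_add_sum_eq_zero (co := fun j => (⟨⟨co j, hZ (hco j)⟩, hco j⟩ : D)) h
  have := finite_of_multilinear_identity_of_isIntegral_words hgenD
    (c := fun σ => algebraMap C D (c σ)) (by rw [hc1, map_one]) hPID hintD
  obtain ⟨t, b, hb⟩ := Module.Finite.exists_fin (R := D) (M := B)
  refine ⟨t, b, fun x => ?_⟩
  obtain ⟨cc, rfl⟩ := (Submodule.mem_span_range_iff_exists_fun D).1 (hb ▸ Submodule.mem_top : x ∈ _)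
  exact ⟨fun j => cc j, fun j => (cc j).2, rfl⟩

theorem mem_center_of_adjoin_eq_top {C B : Type*} [CommSemiring C] [Semiring B] [Algebra C B]
    {s : Set B} (hgen : Algebra.adjoin C s = ⊤) {z : B} (hz : ∀ y ∈ s, Commute z y) :
    z ∈ Subalgebra.center C B := by
  refine Subalgebra.mem_center_iff.2 fun y => ?_
  have hy : y ∈ Algebra.adjoin C s := hgen ▸ Algebra.mem_top
  exact (Algebra.commute_of_mem_adjoin_of_forall_mem_commute hy hz).symm

theorem exists_map_eq_map_sum_mul {C A B ι : Type*} [CommRing C] [Ring A] [Algebra C A] [Ring B]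
    [Algebra C B] [Finite ι] {a : ι → A} (hgen : Algebra.adjoin C (Set.range a) = ⊤)
    {π : A →ₐ[C] B} (hπ : Function.Surjective π) {d : ℕ} {c : Equiv.Perm (Fin d) → C}
    (hc1 : c 1 = 1) (hPI : ∀ v : Fin d → A, π (∑ σ, c σ • (ofFn (v ∘ σ)).prod) = 0)
    {C₁ : Subalgebra C A} (hcomm : ∀ i, ∀ x ∈ C₁, Commute (π (a i)) (π x))
    (hint : ∀ u : List ι, u ≠ [] → u.length < d → ∃ (n : ℕ) (co : Fin n → A), (∀ j, co j ∈ C₁) ∧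
      π ((u.map a).prod ^ n + ∑ j, co j * (u.map a).prod ^ (j : ℕ)) = 0) :
    ∃ (t : ℕ) (b : Fin t → A), ∀ x : A, ∃ cc : Fin t → A,
      (∀ j, cc j ∈ C₁) ∧ π x = π (∑ j, cc j * b j) := by
  have hgenπ : Algebra.adjoin C (Set.range (π ∘ a)) = ⊤ := by
    rw [Set.range_comp, ← AlgHom.map_adjoin, hgen, Algebra.map_top]
    exact π.range_eq_top.2 hπ
  have hcenter : C₁.map π ≤ Subalgebra.center C B := by
    rintro _ ⟨x, hx, rfl⟩
    refine mem_center_of_adjoin_eq_top hgenπ ?_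
    rintro _ ⟨i, rfl⟩
    exact (hcomm i x hx).symm
  have hPIπ : ∀ v : Fin d → B, ∑ σ, c σ • (ofFn (v ∘ σ)).prod = 0 := fun v => by
    obtain ⟨v, rfl⟩ := hπ.comp_left v
    simpa only [map_sum, map_smul, map_list_prod, map_ofFn, Function.comp_assoc] using hPI v
  have hintπ : ∀ u : List ι, u ≠ [] → u.length < d → ∃ (n : ℕ) (co : Fin n → B),
      (∀ j, co j ∈ C₁.map π) ∧
        (u.map (π ∘ a)).prod ^ n + ∑ j, co j * (u.map (π ∘ a)).prod ^ (j : ℕ) = 0 := by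
    intro u hne hud
    obtain ⟨n, co, hco, h⟩ := hint u hne hud
    refine ⟨n, π ∘ co, fun j => ⟨co j, hco j, rfl⟩, ?_⟩
    simpa only [map_add, map_pow, map_sum, map_mul, map_list_prod, List.map_map,
      Function.comp_apply] using h
  obtain ⟨t, b, hb⟩ := exists_sum_mul_eq_of_le_center hgenπ hc1 hPIπ hcenter hintπ
  obtain ⟨b, rfl⟩ := hπ.comp_left b
  refine ⟨t, b, fun x => ?_⟩
  obtain ⟨cc, hcc, hx⟩ := hb (π x)
  choose cc' hcc' hπcc using fun j => Subalgebra.mem_map.1 (hcc j)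
  refine ⟨cc', hcc', ?_⟩
  simpa only [map_sum, map_mul, hπcc, Function.comp_apply] using hx

end Finiteness

theorem stmt12_general (C : Type*) [CommRing C] (A : Type*) [Ring A] [Algebra C A]
    (ℓ : ℕ) (a : Fin ℓ → A) (hgen : Algebra.adjoin C (Set.range a) = ⊤)
    (M : Type*) [AddCommGroup M] [Module A M]
    (d : ℕ) (c : Equiv.Perm (Fin d) → C) (hc1 : c 1 = 1)
    (hPI : ∀ (v : Fin d → A) (m : M),
      (∑ σ : Equiv.Perm (Fin d), c σ • ((List.finRange d).map fun i => v (σ i)).prod) • m = 0)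
    (C₁ : Subalgebra C A)
    (ha : ∀ (i : Fin ℓ), ∀ x ∈ C₁, ∀ m : M, (a i * x - x * a i) • m = 0)
    (hint : ∀ s : ℕ, 1 ≤ s → s < d → ∀ w : Fin s → Fin ℓ,
      ∃ n : ℕ, ∃ co : Fin n → A, (∀ j, co j ∈ C₁) ∧
        ∀ m : M,
          ((((List.finRange s).map fun j => a (w j)).prod) ^ n +
            ∑ j : Fin n, co j * (((List.finRange s).map fun j => a (w j)).prod) ^ (j : ℕ))
            • m = 0) :
    ∃ (t : ℕ) (b : Fin t → A), ∀ x : A, ∃ cc : Fin t → A,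
      (∀ j, cc j ∈ C₁) ∧ ∀ m : M, (x - ∑ j : Fin t, cc j * b j) • m = 0 := by
  let π := Ideal.Quotient.mkₐ C (Module.annihilator A M)
  have hπ : ∀ y : A, π y = 0 ↔ ∀ m : M, y • m = 0 := fun y =>
    Ideal.Quotient.eq_zero_iff_mem.trans Module.mem_annihilator
  have hwords : ∀ u : List (Fin ℓ), u ≠ [] → u.length < d → ∃ (n : ℕ) (co : Fin n → A),
      (∀ j, co j ∈ C₁) ∧ π ((u.map a).prod ^ n + ∑ j, co j * (u.map a).prod ^ (j : ℕ)) = 0 := by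
    intro u hne hud
    obtain ⟨n, co, hco, h⟩ := hint u.length (length_pos_iff.2 hne) hud u.get
    have hu : (finRange u.length).map (fun j => a (u.get j)) = u.map a := by
      rw [← ofFn_eq_map, ← Function.comp_def, ← map_ofFn, ofFn_get]
    exact ⟨n, co, hco, (hπ _).2 (by rwa [hu] at h)⟩
  obtain ⟨t, b, hb⟩ := exists_map_eq_map_sum_mul hgen
    (Ideal.Quotient.mkₐ_surjective C (Module.annihilator A M)) hc1
    (fun v => (hπ _).2 (by simpa only [ofFn_eq_map, Function.comp_def] using hPI v))
    (fun i x hx => by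
      rw [commute_iff_eq, ← sub_eq_zero, ← map_mul, ← map_mul, ← map_sub]
      exact (hπ _).2 (ha i x hx)) hwords
  refine ⟨t, b, fun x => ?_⟩
  obtain ⟨cc, hcc, hx⟩ := hb x
  refine ⟨cc, hcc, (hπ _).1 ?_⟩
  rw [map_sub, hx, sub_self]

/-- (Shirshov-type finiteness theorem) Let `A` be a unital associative `C`-algebra generated
by `a_1, …, a_ℓ` satisfying a proper multilinear identity of degree `d`, let `M` be a left
`A`-module, and let `C₁` be a commutative `C`-subalgebra of `A` such that (a) the generators
commute with `C₁` modulo the annihilator of `M`, and (b) every word in the generators of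
length `1 ≤ s ≤ d` is integral over `C₁` with respect to `M`.  Then `A` modulo the
annihilator of `M` is a finitely generated `C₁`-module. -/
theorem stmt12 (C : Type*) [CommRing C] (A : Type*) [Ring A] [Algebra C A]
    (ℓ : ℕ) (a : Fin ℓ → A) (hgen : Algebra.adjoin C (Set.range a) = ⊤)
    (d : ℕ) (c : Equiv.Perm (Fin d) → C) (hc1 : c 1 = 1)
    (hPI : ∀ v : Fin d → A,
      ∑ σ : Equiv.Perm (Fin d), c σ • ((List.finRange d).map fun i => v (σ i)).prod = 0)
    (M : Type*) [AddCommGroup M] [Module A M]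
    (C₁ : Subalgebra C A) (hcomm : ∀ x ∈ C₁, ∀ y ∈ C₁, x * y = y * x)
    (ha : ∀ (i : Fin ℓ), ∀ x ∈ C₁, ∀ m : M, (a i * x - x * a i) • m = 0)
    (hint : ∀ s : ℕ, 1 ≤ s → s ≤ d → ∀ w : Fin s → Fin ℓ,
      ∃ n : ℕ, 1 ≤ n ∧ ∃ co : Fin n → A, (∀ j, co j ∈ C₁) ∧
        ∀ m : M,
          ((((List.finRange s).map fun j => a (w j)).prod) ^ n +
            ∑ j : Fin n, co j * (((List.finRange s).map fun j => a (w j)).prod) ^ (j : ℕ))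
            • m = 0) :
    ∃ (t : ℕ) (b : Fin t → A), ∀ x : A, ∃ cc : Fin t → A,
      (∀ j, cc j ∈ C₁) ∧ ∀ m : M, (x - ∑ j : Fin t, cc j * b j) • m = 0 := by
  exact stmt12_general C A ℓ a hgen M d c hc1 (fun v m => by rw [hPI v, zero_smul]) C₁ ha
    fun s hs hsd w => (hint s hs hsd.le w).imp fun _ h => h.2
end

section
/- Let C be a commutative Noetherian ring, ℓ a natural number, I a T-ideal of FreeAlgebra C (Fin ℓ), and let A = FreeAlgebra C (Fin ℓ) / I be the corresponding relatively free affine algebra. Then A has a unique maximal nilpotent T-ideal: there exists a T-ideal N of A which is nilpotent (N^m = 0 for some m, i.e., every product of m elements of N is zero) and which contains every nilpotent T-ideal of A. -/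
/-- A T-ideal of a unital associative `C`-algebra `A` is a two-sided ideal stable under
every `C`-algebra endomorphism of `A`. -/
def IsTIdeal (C : Type*) [CommSemiring C] (A : Type*) [Ring A] [Algebra C A]
    (I : TwoSidedIdeal A) : Prop :=
  ∀ φ : A →ₐ[C] A, ∀ x ∈ I, φ x ∈ I

/-- A two-sided ideal `N` of `A` is nilpotent if for some `m` every product of `m`
elements of `N` is zero. -/
def IsNilpotentTwoSidedIdeal {A : Type*} [Ring A] (N : TwoSidedIdeal A) : Prop :=
  ∃ m : ℕ, ∀ f : Fin m → A, (∀ i, f i ∈ N) → (List.ofFn f).prod = 0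

/-!
A nilpotent ideal consists of strongly nilpotent elements, those that generate a nilpotent ideal.
So it suffices that these are uniformly nilpotent: for some `q`, all products of `q` of them vanish.

This is shown by Noetherian induction on an ideal `𝔞` of `C` that annihilates `A`. If `𝔞` is
proper but not prime, it contains a product `𝔟𝔠` of larger ideals, and the claim for `A / 𝔟A` and
`A / 𝔠A` gives it for `A`. If `𝔞` is prime and every relation between the generators has its
coefficients in `𝔞`, then `A` is free over the domain `C / 𝔞`, hence reduced. Otherwise, since the
relations of a relatively free algebra are identities, polarizing a relation at its longest word
with a coefficient outside `𝔞` gives a multilinear identity with that coefficient. The exponential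
bound on the codimensions then yields, by Regev's counting argument, a strong identity, one that
persists when its alternating letters are separated by arbitrary elements, with a coefficient
outside `𝔞`.

Let `𝔟` be generated by `𝔞` and the coefficients of all strong identities in a given number of
variables. Rearranging tails of words shows that `𝔟` kills a Capelli polynomial, so modulo the
annihilator of `𝔟` the algebra satisfies a Capelli identity, while `A / 𝔟A` is covered by the
induction. For algebras with a Capelli identity, the shift operators of Razmyslov and Zubrilin
commute and make the generators integral on the module of products of two Capelli polynomials;
by Shirshov's height theorem the image of `A` in the endomorphisms of this module is finite over a
commutative Noetherian ring. Hence products of enough strongly nilpotent elements annihilate the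
products of two Capelli polynomials, and modulo the ideal generated by the Capelli polynomial the
algebra satisfies a smaller Capelli identity.
-/

open scoped Pointwise

namespace RelFree

/-! ### Strongly nilpotent elements -/

section StronglyNilpotent

open Set

variable {A B : Type*}

/-- The elements that generate a nilpotent two-sided ideal: all products of sufficiently many
elements of the form `a * z * b` vanish. -/
def stronglyNilpotents (A : Type*) [MonoidWithZero A] : Set A :=
  {z | ∃ k : ℕ, (univ * {z} * univ : Set A) ^ k ⊆ {0}}

/-- The strongly nilpotent elements are nilpotent with a uniform bound: for some `q`, all products
of `q` of them vanish. -/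
def UniformlyNilpotent (A : Type*) [MonoidWithZero A] : Prop :=
  ∃ q : ℕ, stronglyNilpotents A ^ q ⊆ {0}

section MonoidWithZero

variable [MonoidWithZero A] [MonoidWithZero B]

lemma mul_mem_stronglyNilpotents {z : A} (hz : z ∈ stronglyNilpotents A) (a b : A) :
    a * z * b ∈ stronglyNilpotents A := by
  obtain ⟨k, hk⟩ := hz
  refine ⟨k, (pow_subset_pow_left ?_).trans hk⟩
  calc (univ * {a * z * b} * univ : Set A) = (univ * {a}) * {z} * ({b} * univ) := by
        simp only [← singleton_mul_singleton, mul_assoc]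
    _ ⊆ univ * {z} * univ := by gcongr <;> exact subset_univ _

lemma map_mem_stronglyNilpotents {F : Type*} [FunLike F A B] [MonoidWithZeroHomClass F A B]
    {f : F} (hf : Function.Surjective f) {z : A} (hz : z ∈ stronglyNilpotents A) :
    f z ∈ stronglyNilpotents B := by
  obtain ⟨k, hk⟩ := hz
  refine ⟨k, ?_⟩
  rw [← image_univ_of_surjective hf, ← image_singleton, ← image_mul, ← image_mul, ← image_pow]
  simpa using image_mono (f := f) hk

lemma UniformlyNilpotent.exists_pow_subset_preimage {F : Type*} [FunLike F A B]
    [MonoidWithZeroHomClass F A B] (hB : UniformlyNilpotent B) {f : F}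
    (hf : Function.Surjective f) : ∃ q : ℕ, stronglyNilpotents A ^ q ⊆ f ⁻¹' {0} := by
  obtain ⟨q, hq⟩ := hB
  have himage : f '' stronglyNilpotents A ⊆ stronglyNilpotents B :=
    image_subset_iff.2 fun z hz => map_mem_stronglyNilpotents hf hz
  refine ⟨q, image_subset_iff.1 ?_⟩
  rw [image_pow]
  exact (pow_subset_pow_left himage).trans hq

lemma UniformlyNilpotent.of_mul_subset {P Q : Set A} (hPQ : P * Q ⊆ {0})
    (hP : ∃ q : ℕ, stronglyNilpotents A ^ q ⊆ P) (hQ : ∃ q : ℕ, stronglyNilpotents A ^ q ⊆ Q) :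
    UniformlyNilpotent A := by
  obtain ⟨p, hp⟩ := hP
  obtain ⟨q, hq⟩ := hQ
  exact ⟨p + q, (pow_add (stronglyNilpotents A) p q).trans_subset
    ((mul_subset_mul hp hq).trans hPQ)⟩

lemma UniformlyNilpotent.of_subsingleton [Subsingleton A] : UniformlyNilpotent A :=
  ⟨0, fun _ _ => Subsingleton.elim _ _⟩

lemma union_pow_subset_pow_union (s t : Set A) (k : ℕ) :
    (s ∪ t) ^ k ⊆ s ^ k ∪ univ * t * univ := by
  induction k with
  | zero => exact subset_union_left
  | succ k ih =>
    rw [pow_succ, pow_succ]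
    rintro _ ⟨a, ha, b, hb | hb, rfl⟩
    · rcases ih ha with ha | ⟨c, hc, d, -, rfl⟩
      · exact Or.inl (mul_mem_mul ha hb)
      · exact Or.inr ⟨c, hc, d * b, mem_univ _, (mul_assoc c d b).symm⟩
    · exact Or.inr ⟨a * b, mul_mem_mul (mem_univ a) hb, 1, mem_univ _, mul_one _⟩

lemma exists_pow_subset_zero_of_finite {s : Set A} (hs : s.Finite)
    (h : s ⊆ stronglyNilpotents A) : ∃ q : ℕ, s ^ q ⊆ {0} := by
  induction s, hs using Set.Finite.induction_on with
  | empty => exact ⟨1, by simp⟩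
  | @insert z s _ _ ih =>
    obtain ⟨p, hp⟩ := ih ((subset_insert z s).trans h)
    obtain ⟨k, hk⟩ := h (mem_insert z s)
    have hzero : ({0} : Set A) ⊆ univ * {z} * univ := by
      rw [singleton_subset_iff, ← zero_mul (z * 1), ← mul_assoc]
      exact mul_mem_mul (mul_mem_mul (mem_univ 0) rfl) (mem_univ 1)
    refine ⟨p * k, ?_⟩
    rw [pow_mul, insert_eq, union_comm]
    refine (pow_subset_pow_left ?_).trans hk
    exact (union_pow_subset_pow_union s {z} p).trans (union_subset (hp.trans hzero) subset_rfl)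

end MonoidWithZero

lemma pow_subset_zero_of_subset_span (R : Type*) [CommSemiring R] [Semiring A] [Algebra R A]
    {s t : Set A} {q : ℕ} (hst : s ⊆ Submodule.span R t) (ht : t ^ q ⊆ {0}) : s ^ q ⊆ {0} :=
  calc s ^ q ⊆ (Submodule.span R t : Set A) ^ q := pow_subset_pow_left hst
    _ ⊆ ↑(Submodule.span R t ^ q) := Submodule.pow_subset_pow _
    _ = Submodule.span R (t ^ q) := by rw [Submodule.span_pow]
    _ ⊆ (⊥ : Submodule R A) := Submodule.span_le.2 ht

lemma exists_pow_subset_preimage_of_fg_span {R E : Type*} [CommRing R] [IsNoetherianRing R]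
    [Ring A] [Ring E] [Algebra R E] (ψ : A →+* E) (hψ : (Submodule.span R (range ψ)).FG) :
    ∃ q : ℕ, stronglyNilpotents A ^ q ⊆ ψ ⁻¹' {0} := by
  classical
  have hfg : (Submodule.span R (ψ '' stronglyNilpotents A)).FG :=
    hψ.of_le (Submodule.span_mono (image_subset_range ψ _))
  obtain ⟨t', ht', hspan⟩ := (Submodule.fg_span_iff_fg_span_finset_subset _).1 hfg
  obtain ⟨t, ht, rfl⟩ := Finset.subset_set_image_iff.1 ht'
  obtain ⟨q, hq⟩ := exists_pow_subset_zero_of_finite t.finite_toSet ht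
  refine ⟨q, image_subset_iff.1 ?_⟩
  rw [image_pow]
  refine pow_subset_zero_of_subset_span R (t := ψ '' t) ?_ ?_
  · rw [← Finset.coe_image, ← hspan]
    exact Submodule.subset_span
  · simpa [image_pow] using image_mono (f := ψ) hq

section TwoSidedIdeal

variable [Ring A]

lemma isNilpotentTwoSidedIdeal_iff {N : TwoSidedIdeal A} :
    IsNilpotentTwoSidedIdeal N ↔ ∃ m : ℕ, (N : Set A) ^ m ⊆ {0} := by
  refine exists_congr fun m => ⟨fun h a ha => ?_, fun h f hf => ?_⟩
  · obtain ⟨f, rfl⟩ := mem_pow.1 ha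
    exact h _ fun i => (f i).2
  · exact h (mem_pow.2 ⟨fun i => ⟨f i, hf i⟩, rfl⟩)

lemma subset_stronglyNilpotents {N : TwoSidedIdeal A} (hN : IsNilpotentTwoSidedIdeal N) :
    (N : Set A) ⊆ stronglyNilpotents A := by
  obtain ⟨m, hm⟩ := isNilpotentTwoSidedIdeal_iff.1 hN
  refine fun z hz => ⟨m, (pow_subset_pow_left ?_).trans hm⟩
  rintro _ ⟨_, ⟨a, -, _, rfl, rfl⟩, b, -, rfl⟩
  exact N.mul_mem_right _ _ (N.mul_mem_left _ _ hz)

lemma sSup_subset_span_stronglyNilpotents {𝒩 : Set (TwoSidedIdeal A)}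
    (h𝒩 : ∀ N ∈ 𝒩, IsNilpotentTwoSidedIdeal N) :
    ((sSup 𝒩 : TwoSidedIdeal A) : Set A) ⊆ Submodule.span ℤ (stronglyNilpotents A) := by
  have hle : sSup 𝒩 ≤ TwoSidedIdeal.span (stronglyNilpotents A) :=
    sSup_le fun N hN z hz => TwoSidedIdeal.subset_span (subset_stronglyNilpotents (h𝒩 N hN) hz)
  refine fun z hz => ?_
  have := hle hz
  rw [TwoSidedIdeal.mem_span_iff_mem_addSubgroup_closure] at this
  rw [SetLike.mem_coe, ← Submodule.mem_toAddSubgroup, Submodule.span_int_eq_addSubgroupClosure]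
  refine AddSubgroup.closure_mono ?_ this
  rintro _ ⟨_, ⟨a, -, z, hz, rfl⟩, b, -, rfl⟩
  exact mul_mem_stronglyNilpotents hz a b

lemma UniformlyNilpotent.isNilpotentTwoSidedIdeal_sSup (hA : UniformlyNilpotent A)
    {𝒩 : Set (TwoSidedIdeal A)} (h𝒩 : ∀ N ∈ 𝒩, IsNilpotentTwoSidedIdeal N) :
    IsNilpotentTwoSidedIdeal (sSup 𝒩) :=
  isNilpotentTwoSidedIdeal_iff.2 <| hA.imp fun _ =>
    pow_subset_zero_of_subset_span ℤ (sSup_subset_span_stronglyNilpotents h𝒩)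

end TwoSidedIdeal

end StronglyNilpotent

/-! ### Shirshov's lemma on words -/

section Words

variable {X : Type*}

/-- The factor of length `h` of the word `w` that starts at position `i`. -/
def window (w : List X) (i h : ℕ) : List X := (w.drop i).take h

lemma length_window {w : List X} {i h : ℕ} (hw : i + h ≤ w.length) :
    (window w i h).length = h := by
  rw [window, List.length_take, List.length_drop]
  omega

lemma window_window (w : List X) {i j h k : ℕ} (hk : j + k ≤ h) :
    window (window w i h) j k = window w (i + j) k := by
  rw [window, window, window, List.drop_take, List.take_take, List.drop_drop, min_eq_left]
  omega

lemma window_eq_of_le {w : List X} {a b h k : ℕ} (hk : k ≤ h)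
    (hab : window w a h = window w b h) : window w a k = window w b k := by
  rw [← add_zero a, ← window_window w (by omega : 0 + k ≤ h), hab,
    window_window w (by omega), add_zero]

lemma flatten_replicate_prefix (q : ℕ) : ∀ (k : ℕ) (x : List X),
    x.take (q * k) = window x q (q * k) → q * k + q ≤ x.length →
      (List.replicate k (x.take q)).flatten <+: x
  | 0, _, _, _ => List.nil_prefix
  | k + 1, x, hx, hlen => by
    rw [Nat.mul_succ] at hx hlen
    have hdrop : (x.drop q).take (q * k) = window (x.drop q) q (q * k) := by
      simpa [window, List.drop_take] using congrArg (List.drop q) hx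
    have htake : (x.drop q).take q = x.take q := by
      simpa [window, List.take_take] using (congrArg (List.take q) hx).symm
    have ih := flatten_replicate_prefix q k (x.drop q) hdrop (by rw [List.length_drop]; omega)
    rw [htake] at ih
    rw [List.replicate_succ, List.flatten_cons]
    simpa only [List.take_append_drop] using (List.prefix_append_right_inj (x.take q)).2 ih

lemma exists_flatten_replicate_infix {w : List X} {a b m k : ℕ} (hab : a < b) (hb : b < m)
    (hw : m * k + m ≤ w.length) (h : window w a (m * k) = window w b (m * k)) :
    ∃ u : List X, u ≠ [] ∧ u.length < m ∧ (List.replicate k u).flatten <:+: w := by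
  obtain ⟨q, rfl⟩ := Nat.exists_eq_add_of_lt hab
  set p := q + 1
  have hpk : p * k ≤ m * k := Nat.mul_le_mul_right _ (by omega)
  have hshift : (w.drop a).take (p * k) = window (w.drop a) p (p * k) := by
    have := window_eq_of_le hpk h
    rwa [window, window, add_assoc, ← List.drop_drop] at this
  have hprefix := flatten_replicate_prefix p k (w.drop a) hshift (by rw [List.length_drop]; omega)
  have hlength : ((w.drop a).take p).length = p := length_window (by omega)
  exact ⟨(w.drop a).take p, List.ne_nil_of_length_pos (by omega), by omega,
    hprefix.isInfix.trans (List.drop_suffix a w).isInfix⟩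

lemma exists_cut (h : ℕ) : ∀ (m : ℕ) (w : List X) (p : Fin m → ℕ),
    (∀ i j, i < j → p i + h ≤ p j) → (∀ i, p i + h ≤ w.length) →
    ∃ (u : List X) (B : Fin m → List X), w = u ++ (List.ofFn B).flatten ∧
      ∀ i, window w (p i) h <+: B i
  | 0, w, p, _, _ => ⟨w, Fin.elim0, by simp, fun i => i.elim0⟩
  | m + 1, w, p, hgap, hend => by
    have hlast : ∀ i : Fin m, p i.castSucc + h ≤ p (Fin.last m) :=
      fun i => hgap _ _ (Fin.castSucc_lt_last i)
    obtain ⟨u, B, hu, hB⟩ := exists_cut h m (w.take (p (Fin.last m))) (fun i => p i.castSucc)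
      (fun i j hij => hgap _ _ (by simpa using hij))
      (fun i => by
        have h1 := hlast i
        have h2 := hend (Fin.last m)
        rw [List.length_take]
        omega)
    refine ⟨u, Fin.snoc B (w.drop (p (Fin.last m))), ?_, Fin.lastCases ?_ fun i => ?_⟩
    · rw [List.ofFn_succ']
      simp only [Fin.snoc_castSucc, Fin.snoc_last, List.concat_eq_append, List.flatten_append,
        List.flatten_cons, List.flatten_nil, List.append_nil]
      rw [← List.append_assoc, ← hu, List.take_append_drop]
    · rw [Fin.snoc_last]
      exact List.take_prefix _ _
    · have hwin : window (w.take (p (Fin.last m))) (p i.castSucc) h =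
          window w (p i.castSucc) h := by
        simpa [window] using window_window w (i := 0) (hlast i)
      rw [Fin.snoc_castSucc, ← hwin]
      exact hB i

variable [LinearOrder X]

lemma append_lt_append_of_lt_of_length_eq : ∀ {l₁ l₂ : List X}, l₁ < l₂ →
    l₁.length = l₂.length → ∀ s t : List X, l₁ ++ s < l₂ ++ t
  | [], [], h, _, _, _ => absurd h (lt_irrefl _)
  | a :: l₁, b :: l₂, h, hl, s, t => by
    rw [List.cons_append, List.cons_append, List.cons_lt_cons_iff]
    refine (List.cons_lt_cons_iff.1 h).imp_right (And.imp_right fun h => ?_)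
    exact append_lt_append_of_lt_of_length_eq h (by simpa using hl) s t

lemma flatten_lt_flatten_of_perm : ∀ {l l' : List (List X)},
    l.Pairwise (fun b c => ∀ s t, c ++ s < b ++ t) → l'.Perm l → l' ≠ l →
      l'.flatten < l.flatten
  | [], l', _, hp, hne => absurd (List.perm_nil.1 hp) hne
  | b :: t, [], _, hp, _ => absurd hp.length_eq (by simp)
  | b :: t, b' :: t', hl, hp, hne => by
    rw [List.pairwise_cons] at hl
    rw [List.flatten_cons, List.flatten_cons]
    by_cases hb : b' = b
    · subst hb
      exact List.append_left_lt (flatten_lt_flatten_of_perm hl.2 ((List.perm_cons b').1 hp)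
        fun h => hne (by rw [h]))
    · exact hl.1 b' (List.mem_of_ne_of_mem hb (hp.subset List.mem_cons_self)) _ _

/-- A word is `m`-decomposable if it ends in `m` consecutive blocks such that every nontrivial
permutation of the blocks makes the word lexicographically smaller. -/
def Decomposable (m : ℕ) (w : List X) : Prop :=
  ∃ (u : List X) (B : Fin m → List X), w = u ++ (List.ofFn B).flatten ∧
    ∀ σ : Equiv.Perm (Fin m), σ ≠ 1 → u ++ (List.ofFn (B ∘ σ)).flatten < w

/-- One cuts the word at the beginnings of the windows. -/
lemma decomposable_of_windows {m h : ℕ} {w : List X} (p : Fin m → ℕ)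
    (hgap : ∀ i j, i < j → p i + h ≤ p j) (hend : ∀ i, p i + h ≤ w.length)
    (hdec : ∀ i j, i < j → window w (p j) h < window w (p i) h) :
    Decomposable m w := by
  obtain ⟨u, B, hu, hB⟩ := exists_cut h m w p hgap hend
  have hlt : ∀ i j, i < j → ∀ s t, B j ++ s < B i ++ t := by
    intro i j hij s t
    obtain ⟨ti, hti⟩ := hB i
    obtain ⟨tj, htj⟩ := hB j
    rw [← hti, ← htj, List.append_assoc, List.append_assoc]
    exact append_lt_append_of_lt_of_length_eq (hdec i j hij)
      ((length_window (hend j)).trans (length_window (hend i)).symm) _ _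
  have hinj : Function.Injective B := .of_lt_imp_ne fun i j hij h =>
    lt_irrefl (B i ++ []) (by simpa only [h] using hlt i j hij [] [])
  refine ⟨u, B, hu, fun σ hσ => ?_⟩
  rw [hu]
  refine List.append_left_lt (flatten_lt_flatten_of_perm (List.pairwise_ofFn.2 hlt)
    (Equiv.Perm.ofFn_comp_perm σ B) fun h => hσ ?_)
  exact Equiv.ext fun i => hinj (congrFun (List.ofFn_injective h) i)

/-- One picks from the `i`-th copy of `s` its `i`-th largest window. -/
lemma decomposable_of_repeated_factor {m h : ℕ} {w s : List X} (p : Fin m → ℕ)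
    (hlen : h + m ≤ s.length) (hgap : ∀ i j, i < j → p i + s.length ≤ p j)
    (hend : ∀ i, p i + s.length ≤ w.length) (hs : ∀ i, window w (p i) s.length = s)
    (hinj : Function.Injective fun o : Fin m => window s o h) : Decomposable m w := by
  classical
  have hcard : (Finset.univ.image fun o : Fin m => window s o h).card = m := by
    rw [Finset.card_image_of_injective _ hinj, Finset.card_univ, Fintype.card_fin]
  let v := Finset.orderEmbOfFin _ hcard
  have hv : ∀ i, ∃ o ∈ Finset.univ, window s (o : Fin m) h = v i := fun i =>
    Finset.mem_image.1 (Finset.orderEmbOfFin_mem _ hcard i)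
  choose o _ ho using hv
  have hwindow : ∀ i j : Fin m, window w (p i + o j) h = v j := fun i j =>
    calc window w (p i + o j) h = window (window w (p i) s.length) (o j) h :=
          (window_window _ (by omega)).symm
      _ = v j := by rw [hs, ho]
  refine decomposable_of_windows (h := h) (fun i => p i + o i.rev) (fun i j hij => ?_)
    (fun i => ?_) fun i j hij => ?_
  · have := hgap i j hij
    omega
  · have := hend i
    omega
  · rw [hwindow, hwindow]
    exact v.strictMono (Fin.rev_lt_rev.2 hij)

/-- The word is cut into segments of equal length; by the pigeonhole principle, `m` of them
coincide. -/
lemma exists_repeated_factor [Finite X] (m T : ℕ) : ∃ L : ℕ, ∀ w : List X, L ≤ w.length →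
    ∃ (s : List X) (p : Fin m → ℕ), s.length = T ∧ (∀ i j, i < j → p i + T ≤ p j) ∧
      (∀ i, p i + T ≤ w.length) ∧ ∀ i, window w (p i) T = s := by
  classical
  have := Fintype.ofFinite X
  let N := Fintype.card (List.Vector X T) * m + 1
  refine ⟨T * N, fun w hw => ?_⟩
  have hend : ∀ i : Fin N, T * i + T ≤ w.length := fun i =>
    (Nat.mul_le_mul_left T i.2).trans hw
  let f : Fin N → List.Vector X T := fun i => ⟨window w (T * i) T, length_window (hend i)⟩
  obtain ⟨s, hs⟩ : ∃ s, m < (Finset.univ.filter fun i => f i = s).card :=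
    Fintype.exists_lt_card_fiber_of_mul_lt_card f (by simp [N])
  let e := Finset.orderEmbOfCardLe _ hs.le
  refine ⟨s.1, fun i => T * e i, s.2, fun i j hij => ?_, fun i => hend _, fun i => ?_⟩
  · exact Nat.mul_le_mul_left T (e.strictMono hij : e i < e j)
  · exact congrArg Subtype.val (Finset.mem_filter.1 (Finset.orderEmbOfCardLe_mem _ hs.le i)).2

lemma exists_forall_decomposable_or_replicate_infix [Finite X] (m k : ℕ) :
    ∃ L : ℕ, ∀ w : List X, L ≤ w.length → Decomposable m w ∨
      ∃ u : List X, u ≠ [] ∧ u.length < m ∧ (List.replicate k u).flatten <:+: w := by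
  obtain ⟨L, hL⟩ := exists_repeated_factor (X := X) (m + 1) (m * k + m)
  refine ⟨L, fun w hw => ?_⟩
  obtain ⟨s, p, hs, hgap, hend, hp⟩ := hL w hw
  by_cases hinj : Function.Injective fun o : Fin m => window s o (m * k)
  · refine .inl (decomposable_of_repeated_factor (fun i => p i.castSucc) hs.ge ?_ ?_ ?_ hinj)
    · exact fun i j hij => by simpa only [hs] using hgap _ _ (by simpa using hij)
    · exact fun i => by simpa only [hs] using hend i.castSucc
    · exact fun i => by simpa only [hs] using hp i.castSucc
  · obtain ⟨a, b, hab, h⟩ : ∃ a b : Fin m, a < b ∧ window s a (m * k) = window s b (m * k) := by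
      by_contra! hne
      exact hinj (.of_lt_imp_ne hne)
    obtain ⟨u, hu, hum, hus⟩ := exists_flatten_replicate_infix hab b.2 hs.ge h
    refine .inr ⟨u, hu, hum, hus.trans ?_⟩
    rw [← hp 0]
    exact (List.take_prefix _ _).isInfix.trans (List.drop_suffix _ _).isInfix

end Words

/-! ### Multilinear identities and bounded height -/

section Height

variable {X A : Type*}

/-- The value of the word `w` under the assignment `r` of its letters. -/
def mon [Monoid A] (r : X → A) (w : List X) : A := (w.map r).prod

section Monoid

variable [Monoid A] (r : X → A)

@[simp] lemma mon_append (u v : List X) : mon r (u ++ v) = mon r u * mon r v := by simp [mon]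

lemma mon_flatten (B : List (List X)) : mon r B.flatten = (B.map (mon r)).prod := by
  rw [mon, List.map_flatten, List.prod_flatten, List.map_map]
  rfl

lemma mon_flatten_ofFn {m : ℕ} (B : Fin m → List X) :
    mon r (List.ofFn B).flatten = (List.ofFn fun i => mon r (B i)).prod := by
  rw [mon_flatten, List.map_ofFn, Function.comp_def]

lemma mon_flatten_replicate (u : List X) (k : ℕ) :
    mon r (List.replicate k u).flatten = mon r u ^ k := by
  rw [mon_flatten, List.map_replicate, List.prod_replicate]

lemma coe_closure_range_eq_range_mon :
    (Submonoid.closure (Set.range r) : Set A) = Set.range (mon r) := by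
  ext a
  rw [← FreeMonoid.mrange_lift, SetLike.mem_coe, MonoidHom.mem_mrange]
  exact exists_congr fun w => by rw [FreeMonoid.lift_apply]; rfl

end Monoid

lemma span_range_mon {C : Type*} [CommSemiring C] [Semiring A] [Algebra C A] {r : X → A}
    (hr : Algebra.adjoin C (Set.range r) = ⊤) : Submodule.span C (Set.range (mon r)) = ⊤ := by
  rw [← coe_closure_range_eq_range_mon, ← Algebra.adjoin_eq_span, hr, Algebra.top_toSubmodule]

/-- The multilinear identity `∑ c_σ x_{σ 0} x_{σ 1} ⋯ = 0` of `A`. -/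
def MultilinearIdentity {C : Type*} (A : Type*) [CommSemiring C] [Semiring A] [Module C A]
    {m : ℕ} (c : Equiv.Perm (Fin m) → C) : Prop :=
  ∀ x : Fin m → A, ∑ σ, c σ • (List.ofFn (x ∘ σ)).prod = 0

/-- The identity, applied to the blocks of `w`, expresses `w` by smaller words. -/
lemma MultilinearIdentity.smul_mon_mem [LinearOrder X] {C : Type*} [CommRing C] [Ring A]
    [Algebra C A] {m : ℕ} {c : Equiv.Perm (Fin m) → C} (hc : MultilinearIdentity A c) (r : X → A)
    {w : List X} (hw : Decomposable m w) (N : Submodule C A)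
    (hN : ∀ v : List X, v.Perm w → v < w → mon r v ∈ N) : c 1 • mon r w ∈ N := by
  classical
  obtain ⟨u, B, rfl, hB⟩ := hw
  have hsum : ∑ σ, c σ • mon r (u ++ (List.ofFn (B ∘ σ)).flatten) = 0 := by
    have := congrArg (mon r u * ·) (hc fun j => mon r (B j))
    simpa only [mon_append, mon_flatten_ofFn, Finset.mul_sum, mul_smul_comm, mul_zero,
      Function.comp_def] using this
  rw [← Finset.add_sum_erase _ _ (Finset.mem_univ 1), Equiv.Perm.coe_one, Function.comp_id]
    at hsum
  rw [eq_neg_of_add_eq_zero_left hsum]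
  refine neg_mem (sum_mem fun σ hσ => N.smul_mem _ (hN _ ?_ (hB σ (Finset.ne_of_mem_erase hσ))))
  exact (σ.ofFn_comp_perm B).flatten.append_left u

/-- Integrality of `u` over `R` expresses a word containing `u ^ k` by shorter words. -/
lemma map_mon_mem_of_pow_mem_span {R E : Type*} [CommSemiring R] [Monoid A] [Semiring E]
    [Algebra R E] (r : X → A) (ψ : A →* E) {u w : List X} {k : ℕ} (hu : u ≠ [])
    (hw : (List.replicate k u).flatten <:+: w)
    (hint : ψ (mon r u) ^ k ∈ Submodule.span R ((ψ (mon r u) ^ ·) '' Set.Iio k))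
    (N : Submodule R E) (hN : ∀ v : List X, v.length < w.length → ψ (mon r v) ∈ N) :
    ψ (mon r w) ∈ N := by
  obtain ⟨v₁, v₂, rfl⟩ := hw
  let T : E →ₗ[R] E := LinearMap.mulLeft R (ψ (mon r v₁)) ∘ₗ LinearMap.mulRight R (ψ (mon r v₂))
  have hT : ∀ j, T (ψ (mon r u) ^ j) = ψ (mon r (v₁ ++ (List.replicate j u).flatten ++ v₂)) := by
    intro j
    simp [T, mon_flatten_replicate]
  have hle : Submodule.span R ((ψ (mon r u) ^ ·) '' Set.Iio k) ≤ N.comap T := by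
    rw [Submodule.span_le]
    rintro _ ⟨j, hj, rfl⟩
    rw [SetLike.mem_coe, Submodule.mem_comap, hT]
    have := Nat.mul_lt_mul_of_pos_right hj (List.length_pos_iff.2 hu)
    exact hN _ (by simpa [List.length_flatten] using this)
  rw [← hT]
  exact hle hint

/-- Shirshov's height theorem. -/
lemma fg_span_range_of_multilinearIdentity {C R E : Type*} [CommRing C] [CommRing R] [Ring A]
    [Ring E] [Algebra C R] [Algebra C A] [Algebra C E] [Algebra R E] [IsScalarTower C R E]
    [Finite X] {r : X → A} (hr : Algebra.adjoin C (Set.range r) = ⊤) (ψ : A →ₐ[C] E) {m k : ℕ}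
    (hstd : MultilinearIdentity A fun σ : Equiv.Perm (Fin m) => (Equiv.Perm.sign σ : ℤ))
    (hint : ∀ u : List X, u ≠ [] → u.length < m →
      ψ (mon r u) ^ k ∈ Submodule.span R ((ψ (mon r u) ^ ·) '' Set.Iio k)) :
    (Submodule.span R (Set.range ψ)).FG := by
  obtain ⟨_, _⟩ := exists_wellFoundedLT X
  obtain ⟨L, hL⟩ := exists_forall_decomposable_or_replicate_infix (X := X) m k
  set P := Submodule.span R ((fun w => ψ (mon r w)) '' {w : List X | w.length < L})
  have hmon : ∀ w, ψ (mon r w) ∈ P := by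
    intro w
    induction w using (List.Shortlex.wf (wellFounded_lt (α := X))).induction with
    | _ w ih =>
    rcases lt_or_ge w.length L with hw | hw
    · exact Submodule.subset_span ⟨w, hw, rfl⟩
    rcases hL w hw with hw | ⟨u, hu, hum, huw⟩
    · have := hstd.smul_mon_mem r hw ((P.restrictScalars ℤ).comap (ψ : A →+ E).toIntLinearMap)
        fun v hv hlt => ih v (.of_lex hv.length_eq hlt)
      simpa using this
    · exact map_mon_mem_of_pow_mem_span r (ψ : A →* E) hu huw (hint u hu hum) P
        fun v hv => ih v (.of_length_lt hv)
  have hall : ⊤ ≤ (P.restrictScalars C).comap ψ.toLinearMap := by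
    rw [← span_range_mon hr, Submodule.span_le]
    rintro _ ⟨w, rfl⟩
    exact hmon w
  have hspan : Submodule.span R (Set.range ψ) = P := by
    refine le_antisymm (Submodule.span_le.2 ?_) (Submodule.span_mono ?_)
    · rintro _ ⟨a, rfl⟩
      exact hall (Submodule.mem_top (x := a))
    · rintro _ ⟨w, -, rfl⟩
      exact ⟨mon r w, rfl⟩
  rw [hspan]
  exact Submodule.fg_span ((List.finite_length_lt X L).image _)

end Height

/-! ### Capelli identities -/

section Capelli

variable {A : Type*} [Ring A] {n : ℕ}

/-- The Capelli polynomial `∑ sign(σ) x_{σ 0} y₀ x_{σ 1} y₁ ⋯`, alternating in the variables `x`.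
The coefficients `y` come first, since most arguments fix them. -/
def capelli (y x : Fin n → A) : A :=
  ∑ σ : Equiv.Perm (Fin n), (Equiv.Perm.sign σ : ℤ) • (List.ofFn fun j => x (σ j) * y j).prod

/-- The algebra `A` satisfies the Capelli identity in `n` alternating variables. -/
def CapelliIdentity (A : Type*) [Ring A] (n : ℕ) : Prop := ∀ y x : Fin n → A, capelli y x = 0

lemma capelli_mul (y x : Fin (n + 1) → A) (a : A) :
    capelli y x * a = capelli (Function.update y (Fin.last n) (y (Fin.last n) * a)) x := by
  rw [capelli, capelli, Finset.sum_mul]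
  refine Finset.sum_congr rfl fun σ _ => ?_
  rw [smul_mul_assoc, List.ofFn_succ', List.ofFn_succ']
  simp [mul_assoc, Function.update_of_ne, Fin.castSucc_ne_last]

lemma capelli_comp_perm (y x : Fin n → A) (τ : Equiv.Perm (Fin n)) :
    capelli y (x ∘ τ) = (Equiv.Perm.sign τ : ℤ) • capelli y x := by
  rw [capelli, capelli, Finset.smul_sum]
  refine Fintype.sum_equiv (Equiv.mulLeft τ) _ _ fun σ => ?_
  simp [smul_smul, ← mul_assoc, -zsmul_eq_mul]

lemma cons_comp_swap_zero_succ {α : Type*} (a : α) (v : Fin n → α) (i : Fin n) :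
    (Fin.cons a v : Fin (n + 1) → α) ∘ Equiv.swap 0 i.succ =
      Fin.cons (v i) (Function.update v i a) := by
  funext j
  refine Fin.cases (by simp) (fun j => ?_) j
  obtain rfl | hj := eq_or_ne j i
  · simp
  · simp [Equiv.swap_apply_of_ne_of_ne, hj]

lemma capelli_cons (a b : A) (y x : Fin n → A) :
    capelli (Fin.cons b y : Fin (n + 1) → A) (Fin.cons a x : Fin (n + 1) → A) =
      a * b * capelli y x - ∑ i, x i * b * capelli y (Function.update x i a) := by
  let F (τ : Equiv.Perm (Fin (n + 1))) (z : Fin (n + 1) → A) : A := (Equiv.Perm.sign τ : ℤ) •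
    (List.ofFn fun j => z (τ j) * (Fin.cons b y : Fin (n + 1) → A) j).prod
  have hfix (c : A) (v : Fin n → A) :
      ∑ σ, F (Equiv.Perm.decomposeFin.symm (0, σ)) (Fin.cons c v) = c * b * capelli y v := by
    rw [capelli, Finset.mul_sum]
    refine Finset.sum_congr rfl fun σ _ => ?_
    simp [F, List.ofFn_succ, Equiv.Perm.decomposeFin.symm_sign, -zsmul_eq_mul]
  have hswap (i : Fin n) (σ : Equiv.Perm (Fin n)) (z : Fin (n + 1) → A) :
      F (Equiv.Perm.decomposeFin.symm (i.succ, σ)) z =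
        -F (Equiv.Perm.decomposeFin.symm (0, σ)) (z ∘ Equiv.swap 0 i.succ) := by
    simp [F, Equiv.Perm.decomposeFin.symm_sign, Fin.succ_ne_zero, -zsmul_eq_mul]
  calc capelli (Fin.cons b y : Fin (n + 1) → A) (Fin.cons a x : Fin (n + 1) → A)
      = ∑ p, ∑ σ, F (Equiv.Perm.decomposeFin.symm (p, σ)) (Fin.cons a x) := by
        rw [← Fintype.sum_prod_type']
        exact (Equiv.sum_comp Equiv.Perm.decomposeFin.symm fun τ => F τ (Fin.cons a x)).symm
    _ = _ := by
        simp only [Fin.sum_univ_succ, hfix, hswap, cons_comp_swap_zero_succ,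
          Finset.sum_neg_distrib, sub_eq_add_neg]

lemma extend_update_of_injective {α β γ : Type*} [DecidableEq α] [DecidableEq β] {f : α → β}
    (hf : Function.Injective f) (g : α → γ) (e : β → γ) (i : α) (c : γ) :
    Function.extend f (Function.update g i c) e =
      Function.update (Function.extend f g e) (f i) c := by
  funext b
  by_cases hb : ∃ a, f a = b
  · obtain ⟨a, rfl⟩ := hb
    simp only [hf.extend_apply, Function.update_apply, hf.eq_iff]
  · rw [Function.extend_apply' _ _ _ hb, Function.update_of_ne fun h => hb ⟨i, h.symm⟩,
      Function.extend_apply' _ _ _ hb]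

lemma extend_cons {α β : Type*} [DecidableEq α] {k : ℕ} {f : Fin k → α}
    (hf : Function.Injective f) {i : α} (hi : i ∉ Set.range f) (b : β) (v : Fin k → β)
    (x : α → β) :
    Function.extend (Fin.cons i f : Fin (k + 1) → α) (Fin.cons b v) x =
      Function.update (Function.extend f v x) i b := by
  have hcons : Function.Injective (Fin.cons i f : Fin (k + 1) → α) :=
    Fin.cons_injective_iff.2 ⟨hi, hf⟩
  funext a
  by_cases ha : ∃ j, (Fin.cons i f : Fin (k + 1) → α) j = a
  · obtain ⟨j, rfl⟩ := ha
    rw [hcons.extend_apply]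
    cases j using Fin.cases with
    | zero => simp
    | succ j =>
      have hne : f j ≠ i := fun h => hi ⟨j, h⟩
      simp [hne, hf.extend_apply]
  · rw [Function.extend_apply' _ _ _ ha, Function.update_of_ne fun h => ha ⟨0, by simp [h]⟩,
      Function.extend_apply' _ _ _ fun ⟨j, h⟩ => ha ⟨j.succ, h⟩]

lemma CapelliIdentity.mul_capelli (h : CapelliIdentity A (n + 1)) (a b : A) (y x : Fin n → A) :
    a * b * capelli y x = ∑ i, x i * b * capelli y (Function.update x i a) :=
  sub_eq_zero.1 ((capelli_cons a b y x).symm.trans (h _ _))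

/-- Moving the variables `u` of the first polynomial one by one into the second polynomial, where
each of them takes the place of some variable `x i`. -/
lemma CapelliIdentity.capelli_mul_capelli (h : CapelliIdentity A (n + 1)) {k : ℕ}
    (w u : Fin k → A) (y x : Fin n → A) :
    capelli w u * capelli y x = ∑ e : Fin k ↪ Fin n,
      (List.ofFn fun j => x (e j) * w j).prod * capelli y (Function.extend e u x) := by
  induction k with
  | zero =>
    simp [capelli]
  | succ k ih =>
    cases w using Fin.consCases with | _ b w =>
    cases u using Fin.consCases with | _ a v =>
    have hexchange (e : Fin k ↪ Fin n) (P : A) :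
        a * b * (P * capelli y (Function.extend e v x)) =
          ∑ j, v j * b * (P * capelli y (Function.extend e (Function.update v j a) x)) +
          ∑ i : {i // i ∉ Set.range e}, x i * b * (P * capelli y
            (Function.update (Function.extend e v x) i a)) := by
      rw [← mul_assoc, mul_assoc a, h.mul_capelli,
        ← Fintype.sum_subtype_add_sum_subtype (· ∈ Set.range e)]
      refine congrArg₂ _ ?_ ?_
      · refine (Finset.sum_equiv (Equiv.ofInjective e e.injective) (by simp) fun j _ => ?_).symm
        simp [mul_assoc, e.injective.extend_apply, extend_update_of_injective e.injective]
      · refine Fintype.sum_congr _ _ fun i => ?_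
        rw [Function.extend_apply' _ _ _ i.2]
        simp only [mul_assoc]
    rw [capelli_cons, sub_mul, mul_assoc, ih, Finset.mul_sum, Finset.sum_mul]
    simp only [mul_assoc (_ * _) (capelli _ _) (capelli _ _), ih, hexchange]
    simp only [Finset.mul_sum, Finset.sum_add_distrib]
    rw [Finset.sum_comm, add_sub_cancel_left, ← (Equiv.embeddingFinSucc k (Fin n)).symm.sum_comp,
      Fintype.sum_sigma]
    refine Finset.sum_congr rfl fun e _ => Finset.sum_congr rfl fun i _ => ?_
    rw [Equiv.coe_embeddingFinSucc_symm, extend_cons e.injective i.2, List.ofFn_succ]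
    simp [mul_assoc]

lemma CapelliIdentity.capelli_mul_capelli_swap (h : CapelliIdentity A (n + 1))
    (w u y x : Fin n → A) : capelli w u * capelli y x = capelli w x * capelli y u := by
  rw [h.capelli_mul_capelli, capelli, Finset.sum_mul,
    ← Equiv.sum_comp (Equiv.embeddingEquivOfFinite (Fin n)).symm]
  refine Finset.sum_congr rfl fun σ _ => ?_
  have hextend : Function.extend σ u x = u ∘ (σ⁻¹ : Equiv.Perm (Fin n)) :=
    funext fun i => by simp
  calc _ = (List.ofFn fun j => x (σ j) * w j).prod * capelli y (Function.extend σ u x) := rfl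
    _ = _ := by rw [hextend, capelli_comp_perm, Equiv.Perm.sign_inv, mul_smul_comm, smul_mul_assoc]

lemma sum_capelli_piecewise_mul (k : ℕ) (a : A) (y x : Fin n → A) :
    ∑ S ∈ Finset.univ.powersetCard k, capelli y (S.piecewise (fun i => x i * a) x) =
      ∑ S ∈ Finset.univ.powersetCard k, capelli (S.piecewise (fun i => a * y i) y) x := by
  simp only [capelli]
  rw [Finset.sum_comm, Finset.sum_comm (s := Finset.univ.powersetCard k)]
  refine Finset.sum_congr rfl fun σ _ => Finset.sum_equiv σ.symm.finsetCongr ?_ fun S _ => ?_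
  · simp [Finset.mem_powersetCard]
  · congr 3
    funext j
    by_cases hj : σ j ∈ S <;> simp [Finset.piecewise, hj, mul_assoc]

lemma sum_neg_one_pow_card_smul_eq_zero {α M : Type*} [Fintype α] [DecidableEq α] [AddCommGroup M]
    (i : α) (f : Finset α → M) (hf : ∀ S, i ∉ S → f (insert i S) = f S) :
    ∑ S, (-1 : ℤ) ^ S.card • f S = 0 := by
  rw [← Finset.powerset_univ, ← Finset.insert_erase (Finset.mem_univ i),
    Finset.sum_powerset_insert (by simp), ← Finset.sum_add_distrib]
  refine Finset.sum_eq_zero fun S hS => ?_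
  have hi : i ∉ S := fun hi => by simpa using Finset.mem_powerset.1 hS hi
  rw [Finset.card_insert_of_notMem hi, hf S hi, pow_succ, mul_neg_one, neg_smul, add_neg_cancel]

lemma CapelliIdentity.cayley_hamilton (h : CapelliIdentity A (n + 1)) (a b : A) (y x : Fin n → A) :
    ∑ k ∈ Finset.range (n + 1), (-1 : ℤ) ^ k • (a ^ (n - k) * b *
      ∑ S ∈ Finset.univ.powersetCard k, capelli y (S.piecewise (fun i => x i * a) x)) = 0 := by
  let f (i : Fin n) (S : Finset (Fin n)) : A :=
    let v := Function.update x i (a ^ (n - S.card))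
    x i * b * capelli y (S.piecewise (fun j => v j * a) v)
  have hf (i : Fin n) (S : Finset (Fin n)) (hi : i ∉ S) : f i (insert i S) = f i S := by
    have hcard : S.card < n := by simpa using S.card_lt_univ_of_notMem hi
    have hpow : n - S.card = n - (S.card + 1) + 1 := by omega
    simp only [f, Finset.card_insert_of_notMem hi, hpow]
    congr 2
    funext j
    obtain rfl | hj := eq_or_ne j i
    · simp [Finset.piecewise, hi, pow_succ]
    · simp [Finset.piecewise, hj]
  calc _ = ∑ k ∈ Finset.range (n + 1), ∑ S ∈ Finset.univ.powersetCard k,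
        ∑ i, (-1 : ℤ) ^ S.card • f i S := by
        refine Finset.sum_congr rfl fun k _ => ?_
        rw [sum_capelli_piecewise_mul, Finset.mul_sum]
        simp only [h.mul_capelli (a ^ (n - k))]
        rw [Finset.sum_comm, Finset.smul_sum, Finset.sum_comm (s := Finset.univ.powersetCard k)]
        refine Finset.sum_congr rfl fun i _ => ?_
        rw [← Finset.mul_sum, ← sum_capelli_piecewise_mul, Finset.mul_sum, Finset.smul_sum]
        exact Finset.sum_congr rfl fun S hS => by rw [← (Finset.mem_powersetCard.1 hS).2]
    _ = ∑ i, ∑ S, (-1 : ℤ) ^ S.card • f i S := by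
        rw [Finset.sum_comm, ← Finset.powerset_univ, Finset.sum_powerset, Finset.card_univ,
          Fintype.card_fin]
    _ = 0 := Finset.sum_eq_zero fun i _ => sum_neg_one_pow_card_smul_eq_zero i (f i) (hf i)

end Capelli

section Commuting

variable {A : Type*} [Ring A]

/-- The Noetherian commutative ring `R` generated by the coefficients acts on `M`, and the image of
`A` in `End_R M` is a finite `R`-module by Shirshov's theorem. -/
lemma exists_smul_eq_zero_of_commuting (C : Type*) [CommRing C] [IsNoetherianRing C] [Algebra C A]
    [Algebra.FiniteType C A] {M : Type*} [AddCommGroup M] [Module A M] [Module C M]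
    [IsScalarTower C A M] {m n : ℕ}
    (hstd : MultilinearIdentity A fun σ : Equiv.Perm (Fin m) => (Equiv.Perm.sign σ : ℤ))
    (δ : A → ℕ → Module.End A M) (hcomm : ∀ a b k l, Commute (δ a k) (δ b l))
    (hint : ∀ a (v : M), a ^ n • v = ∑ k ∈ Finset.range n, δ a k (a ^ k • v)) :
    ∃ q : ℕ, ∀ a ∈ stronglyNilpotents A ^ q, ∀ v : M, a • v = 0 := by
  obtain ⟨X, hX⟩ := Algebra.FiniteType.out (R := C) (A := A)
  let r : X → A := Subtype.val
  have hr : Algebra.adjoin C (Set.range r) = ⊤ := by simpa [r] using hX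
  let D : Set (Module.End A M) :=
    (fun p : List X × ℕ => δ (mon r p.1) p.2) '' ({u | u.length < m} ×ˢ Set.Iio n)
  have hD : D.Finite := ((List.finite_length_lt X m).prod (Set.finite_Iio n)).image _
  have hDcomm : ∀ d ∈ D, ∀ d' ∈ D, d * d' = d' * d := by
    rintro _ ⟨p, -, rfl⟩ _ ⟨p', -, rfl⟩
    exact hcomm _ _ _ _
  let R := Algebra.adjoin C D
  let _ : CommRing R := { (inferInstance : Ring R) with
    mul_comm := (Algebra.isMulCommutative_adjoin C hDcomm).is_comm.comm }
  have : Algebra.FiniteType C R := R.fg_iff_finiteType.1 (Subalgebra.fg_def.2 ⟨D, hD, rfl⟩)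
  have : IsNoetherianRing R := Algebra.FiniteType.isNoetherianRing C R
  let ψ : A →ₐ[C] Module.End R M := Algebra.lsmul C R M
  have hpow : ∀ u : List X, u ≠ [] → u.length < m →
      ψ (mon r u) ^ n ∈ Submodule.span R ((ψ (mon r u) ^ ·) '' Set.Iio n) := by
    intro u _ hu
    have hsum : ψ (mon r u) ^ n = ∑ k : Fin n,
        (⟨δ (mon r u) k, Algebra.subset_adjoin ⟨(u, k), ⟨hu, k.2⟩, rfl⟩⟩ : R) •
          ψ (mon r u) ^ k.1 := by
      ext v
      rw [LinearMap.sum_apply]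
      simp only [← map_pow]
      exact (hint (mon r u) v).trans (Finset.sum_range _)
    rw [hsum]
    exact sum_mem fun k _ => Submodule.smul_mem _ _ (Submodule.subset_span ⟨k, k.2, rfl⟩)
  obtain ⟨q, hq⟩ := exists_pow_subset_preimage_of_fg_span (R := R) (ψ : A →+* Module.End R M)
    (fg_span_range_of_multilinearIdentity hr ψ hstd hpow)
  exact ⟨q, fun a ha v => LinearMap.congr_fun (hq ha) v⟩

end Commuting

/-! ### The module of products of two Capelli polynomials -/

section CapelliModule

variable {A : Type*} [Ring A] {n : ℕ}

/-- Functions of two blocks of `n` variables, a left `A`-module. -/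
abbrev BlockFun (A : Type*) (n : ℕ) : Type _ := (Fin n → A) → (Fin n → A) → A

/-- The `A`-module generated by the products of two Capelli polynomials, as functions of their
alternating variables. -/
def capelliModule (A : Type*) [Ring A] (n : ℕ) : Submodule A (BlockFun A n) :=
  Submodule.span A {T | ∃ y y' : Fin n → A, T = fun x x' => capelli y x * capelli y' x'}

/-- The shift operator `δ_k^a` of Razmyslov and Zubrilin: multiply `k` of the variables of the
first block on the right by `a`, in all possible ways. -/
def shift (n k : ℕ) (a : A) : BlockFun A n →ₗ[A] BlockFun A n where
  toFun T x x' := ∑ S ∈ Finset.univ.powersetCard k, T (S.piecewise (fun i => x i * a) x) x'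
  map_add' T T' := by funext x x'; simp [Finset.sum_add_distrib]
  map_smul' b T := by funext x x'; simp [Finset.mul_sum]

lemma shift_apply (k : ℕ) (a : A) (T : BlockFun A n) (x x' : Fin n → A) :
    shift n k a T x x' =
      ∑ S ∈ Finset.univ.powersetCard k, T (S.piecewise (fun i => x i * a) x) x' := rfl

lemma shift_zero (a : A) (T : BlockFun A n) : shift n 0 a T = T := by
  funext x x'
  simp [shift_apply]

lemma shift_mem_capelliModule (k : ℕ) (a : A) :
    ∀ T ∈ capelliModule A n, shift n k a T ∈ capelliModule A n := by
  suffices capelliModule A n ≤ (capelliModule A n).comap (shift n k a) from fun T hT => this hT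
  refine Submodule.span_le.2 ?_
  rintro _ ⟨y, y', rfl⟩
  have hshift : shift n k a (fun x x' => capelli y x * capelli y' x') =
      ∑ S ∈ Finset.univ.powersetCard k,
        fun x x' => capelli (S.piecewise (fun i => a * y i) y) x * capelli y' x' := by
    funext x x'
    simp only [shift_apply, Finset.sum_apply]
    rw [← Finset.sum_mul, sum_capelli_piecewise_mul, Finset.sum_mul]
  rw [SetLike.mem_coe, Submodule.mem_comap, hshift]
  exact sum_mem fun S _ => Submodule.subset_span ⟨_, y', rfl⟩

lemma CapelliIdentity.apply_swap (h : CapelliIdentity A (n + 1)) {T : BlockFun A n}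
    (hT : T ∈ capelliModule A n) (x x' : Fin n → A) : T x x' = T x' x := by
  induction hT using Submodule.span_induction with
  | mem T hT =>
    obtain ⟨y, y', rfl⟩ := hT
    exact h.capelli_mul_capelli_swap y x y' x'
  | zero => rfl
  | add T T' _ _ hT hT' => simp only [Pi.add_apply, hT, hT']
  | smul b T _ hT => simp only [Pi.smul_apply, hT]

/-- By the symmetry of the two blocks one of the two shifts can be made to act on the second
block. -/
lemma CapelliIdentity.shift_shift_comm (h : CapelliIdentity A (n + 1)) (k l : ℕ) (a b : A)
    {T : BlockFun A n} (hT : T ∈ capelliModule A n) :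
    shift n k a (shift n l b T) = shift n l b (shift n k a T) := by
  have hsplit (k l : ℕ) (a b : A) (x x' : Fin n → A) : shift n k a (shift n l b T) x x' =
      ∑ S ∈ Finset.univ.powersetCard k, ∑ S' ∈ Finset.univ.powersetCard l,
        T (S'.piecewise (fun i => x' i * b) x') (S.piecewise (fun i => x i * a) x) := by
    rw [shift_apply]
    refine Finset.sum_congr rfl fun S _ => ?_
    rw [h.apply_swap (shift_mem_capelliModule l b T hT), shift_apply]
  funext x x'
  rw [h.apply_swap (shift_mem_capelliModule l b _ (shift_mem_capelliModule k a T hT)) x x',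
    hsplit, hsplit, Finset.sum_comm]
  exact Finset.sum_congr rfl fun S' _ => Finset.sum_congr rfl fun S _ => h.apply_swap hT _ _

lemma CapelliIdentity.sum_shift_pow_smul_eq_zero (h : CapelliIdentity A (n + 1)) (a : A)
    {T : BlockFun A n} (hT : T ∈ capelliModule A n) :
    ∑ k ∈ Finset.range (n + 1), (-1 : ℤ) ^ k • shift n k a (a ^ (n - k) • T) = 0 := by
  induction hT using Submodule.closure_induction with
  | zero => simp
  | add T T' _ _ hT hT' =>
    simp only [smul_add, map_add, Finset.sum_add_distrib, hT, hT', add_zero]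
  | smul_mem b T hT =>
    obtain ⟨y, y', rfl⟩ := hT
    funext x x'
    have := congrArg (· * capelli y' x') (h.cayley_hamilton a b y x)
    simp only [zero_mul, Finset.sum_mul, Finset.mul_sum, smul_mul_assoc] at this
    simpa only [Finset.sum_apply, Pi.smul_apply, shift_apply, smul_eq_mul, mul_assoc,
      Pi.zero_apply] using this

/-- The shift operators restricted to the module of products of two Capelli polynomials. -/
def capelliShift (n k : ℕ) (a : A) : Module.End A (capelliModule A n) :=
  (shift n k a).restrict (shift_mem_capelliModule k a)

lemma CapelliIdentity.commute_capelliShift (h : CapelliIdentity A (n + 1)) (k l : ℕ) (a b : A) :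
    Commute (capelliShift n k a) (capelliShift n l b) :=
  LinearMap.ext fun T => Subtype.ext (h.shift_shift_comm k l a b T.2)

lemma CapelliIdentity.pow_smul_eq_sum (h : CapelliIdentity A (n + 1)) (a : A)
    (T : capelliModule A n) : a ^ n • T =
      ∑ k ∈ Finset.range n, (-(-1 : ℤ) ^ (n - k) • capelliShift n (n - k) a) (a ^ k • T) := by
  have hzero : capelliShift n 0 a = 1 := LinearMap.ext fun T => Subtype.ext (shift_zero a T.1)
  have hsum : ∑ k ∈ Finset.range (n + 1),
      ((-1 : ℤ) ^ (n - k) • capelliShift n (n - k) a) (a ^ k • T) = 0 := by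
    rw [← Finset.sum_flip]
    refine Subtype.ext (Eq.trans ?_ (h.sum_shift_pow_smul_eq_zero a T.2))
    rw [AddSubmonoidClass.coe_finsetSum]
    refine Finset.sum_congr rfl fun k hk => ?_
    rw [Nat.sub_sub_self (Finset.mem_range_succ_iff.1 hk)]
    rfl
  rw [Finset.sum_range_succ, Nat.sub_self, hzero, pow_zero, one_smul] at hsum
  simp only [LinearMap.smul_apply, neg_smul, Finset.sum_neg_distrib] at hsum ⊢
  exact eq_neg_of_add_eq_zero_right hsum

lemma CapelliIdentity.multilinearIdentity_sign (h : CapelliIdentity A n) :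
    MultilinearIdentity A fun σ : Equiv.Perm (Fin n) => (Equiv.Perm.sign σ : ℤ) := by
  intro x
  simpa [capelli, Function.comp_def] using h (fun _ => 1) x

lemma CapelliIdentity.exists_mul_capelli_mul_capelli_eq_zero (C : Type*) [CommRing C]
    [IsNoetherianRing C] [Algebra C A] [Algebra.FiniteType C A]
    (h : CapelliIdentity A (n + 1)) : ∃ q : ℕ, ∀ a ∈ stronglyNilpotents A ^ q,
      ∀ y y' x x' : Fin n → A, a * (capelli y x * capelli y' x') = 0 := by
  obtain ⟨q, hq⟩ := exists_smul_eq_zero_of_commuting (M := capelliModule A n) C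
    h.multilinearIdentity_sign
    (fun a k => -(-1 : ℤ) ^ (n - k) • capelliShift n (n - k) a)
    (fun a b k l => ((h.commute_capelliShift _ _ a b).smul_left _).smul_right _)
    h.pow_smul_eq_sum
  refine ⟨q, fun a ha y y' x x' => ?_⟩
  let T : capelliModule A n := ⟨_, Submodule.subset_span ⟨y, y', rfl⟩⟩
  exact congrFun₂ (congrArg Subtype.val (hq a ha T)) x x'

end CapelliModule

section CapelliInduction

variable {A B : Type*} [Ring A] [Ring B] {n : ℕ}

lemma map_capelli (f : A →+* B) (y x : Fin n → A) :
    f (capelli y x) = capelli (f ∘ y) (f ∘ x) := by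
  simp [capelli, map_list_prod, Function.comp_def]

/-- The left ideal generated by the values of the Capelli polynomial. It is two-sided, because
these values are closed under right multiplication. -/
def capelliIdeal (A : Type*) [Ring A] (n : ℕ) : Ideal A :=
  Ideal.span {a | ∃ y x : Fin n → A, capelli y x = a}

lemma capelli_mem_capelliIdeal (y x : Fin n → A) : capelli y x ∈ capelliIdeal A n :=
  Ideal.subset_span ⟨y, x, rfl⟩

instance capelliIdeal.isTwoSided : (capelliIdeal A (n + 1)).IsTwoSided := by
  refine ⟨fun {a} b ha => ?_⟩
  induction ha using Submodule.span_induction with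
  | mem a ha =>
    obtain ⟨y, x, rfl⟩ := ha
    rw [capelli_mul]
    exact capelli_mem_capelliIdeal _ _
  | zero => simp
  | add u v _ _ hu hv => exact add_mul u v b ▸ add_mem hu hv
  | smul c u _ hu =>
    rw [smul_eq_mul, mul_assoc]
    exact Ideal.mul_mem_left _ c hu

lemma capelliIdentity_quotient_capelliIdeal :
    CapelliIdentity (A ⧸ capelliIdeal A (n + 1)) (n + 1) := by
  intro y x
  obtain ⟨y, rfl⟩ := Ideal.Quotient.mk_surjective.comp_left y
  obtain ⟨x, rfl⟩ := Ideal.Quotient.mk_surjective.comp_left x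
  rw [← map_capelli, Ideal.Quotient.eq_zero_iff_mem]
  exact capelli_mem_capelliIdeal y x

lemma CapelliIdentity.subsingleton (h : CapelliIdentity A 0) : Subsingleton A :=
  subsingleton_of_zero_eq_one (by simpa [capelli] using (h 0 0).symm)

lemma CapelliIdentity.zero_of_one (h : CapelliIdentity A 1) : CapelliIdentity A 0 := by
  intro y x
  simpa [capelli] using h 1 1

lemma mul_span_mul_span_eq_zero {P s : Set A} (hs : (Ideal.span s).IsTwoSided)
    (hP : ∀ a ∈ P, ∀ b, a * b ∈ P) (h : ∀ a ∈ P, ∀ u ∈ s, ∀ v ∈ s, a * (u * v) = 0) :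
    P * ((Ideal.span s : Set A) * (Ideal.span s : Set A)) ⊆ {0} := by
  have hleft : ∀ u ∈ Ideal.span s, ∀ a ∈ P, ∀ v ∈ s, a * (u * v) = 0 := by
    intro u hu
    induction hu using Submodule.span_induction with
    | mem u hu => exact fun a ha v hv => h a ha u hu v hv
    | zero => simp
    | add u u' _ _ hu hu' =>
      intro a ha v hv
      rw [add_mul, mul_add, hu a ha v hv, hu' a ha v hv, add_zero]
    | smul c u _ hu =>
      intro a ha v hv
      rw [smul_eq_mul, mul_assoc, ← mul_assoc a]
      exact hu _ (hP a ha c) v hv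
  rintro _ ⟨a, ha, _, ⟨u, hu, v, hv, rfl⟩, rfl⟩
  suffices ∀ u ∈ Ideal.span s, a * (u * v) = 0 from this u hu
  induction hv using Submodule.span_induction with
  | mem v hv => exact fun u hu => hleft u hu a ha v hv
  | zero => simp
  | add v v' _ _ hv hv' =>
    intro u hu
    rw [mul_add, mul_add, hv u hu, hv' u hu, add_zero]
  | smul c v _ hv =>
    intro u hu
    rw [smul_eq_mul, ← mul_assoc u]
    exact hv _ (Ideal.mul_mem_right c _ hu)

theorem CapelliIdentity.uniformlyNilpotent (C : Type*) [CommRing C] [IsNoetherianRing C]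
    [Algebra C A] [Algebra.FiniteType C A] (h : CapelliIdentity A n) : UniformlyNilpotent A := by
  induction n generalizing A with
  | zero =>
    have := h.subsingleton
    exact UniformlyNilpotent.of_subsingleton
  | succ n ih =>
    obtain _ | n := n
    · exact ih h.zero_of_one
    set S := stronglyNilpotents A
    obtain ⟨q, hq⟩ := h.exists_mul_capelli_mul_capelli_eq_zero C
    have hP : ∀ a ∈ S ^ (q + 1), ∀ b, a * b ∈ S ^ (q + 1) := by
      rintro _ ⟨a, ha, z, hz, rfl⟩ b
      refine ⟨a, ha, z * b, ?_, (mul_assoc a z b).symm⟩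
      simpa only [one_mul] using mul_mem_stronglyNilpotents hz 1 b
    have hkill : S ^ (q + 1) *
        ((capelliIdeal A (n + 1) : Set A) * (capelliIdeal A (n + 1) : Set A)) ⊆ {0} := by
      refine mul_span_mul_span_eq_zero capelliIdeal.isTwoSided hP ?_
      rw [pow_succ']
      rintro _ ⟨z, -, a, ha, rfl⟩ _ ⟨y, x, rfl⟩ _ ⟨y', x', rfl⟩
      dsimp only
      rw [mul_assoc, hq a ha, mul_zero]
    have : Algebra.FiniteType C (A ⧸ capelliIdeal A (n + 1)) :=
      .of_surjective (Ideal.Quotient.mkₐ C _) Ideal.Quotient.mk_surjective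
    obtain ⟨k, hk⟩ := (ih capelliIdentity_quotient_capelliIdeal).exists_pow_subset_preimage
      (f := Ideal.Quotient.mk (capelliIdeal A (n + 1))) Ideal.Quotient.mk_surjective
    have hk' : S ^ k ⊆ capelliIdeal A (n + 1) :=
      fun a ha => Ideal.Quotient.eq_zero_iff_mem.1 (hk ha)
    refine .of_mul_subset hkill ⟨q + 1, subset_rfl⟩ ⟨k + k, ?_⟩
    rw [pow_add]
    exact Set.mul_subset_mul hk' hk'

end CapelliInduction

/-! ### Multilinearization -/

section Multilinearization

variable {X A : Type*} [DecidableEq X] [Ring A] {D k : ℕ}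

/-- The part of the word `v` that is linear in each `z j`, when the letter `i` is evaluated at
`∑_{w₀ j = i} z j`; inclusion–exclusion over the sets `S` of variables set to zero isolates it. -/
def polarization (w₀ : Fin D → X) (z : Fin D → A) (v : List X) : A :=
  ∑ S : Finset (Fin D), (-1 : ℤ) ^ S.card • mon (fun i => ∑ j ∈ Sᶜ with w₀ j = i, z j) v

lemma mon_sum_filter (w₀ : Fin D → X) (z : Fin D → A) (s : Finset (Fin D)) (v : Fin k → X) :
    mon (fun i => ∑ j ∈ s with w₀ j = i, z j) (List.ofFn v) =
      ∑ h : Fin k → Fin D with w₀ ∘ h = v ∧ ∀ t, h t ∈ s, (List.ofFn (z ∘ h)).prod := by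
  rw [mon, List.map_ofFn]
  refine ((MultilinearMap.mkPiAlgebraFin ℤ k A).map_sum_finset (fun _ j => z j)
    fun t => {j ∈ s | w₀ j = v t}).trans (Finset.sum_congr ?_ fun _ _ => rfl)
  ext h
  simp [funext_iff, forall_and, and_comm]

lemma sum_neg_one_pow_card_of_forall_mem_compl {ι κ : Type*} [Finite ι] [Fintype κ]
    [DecidableEq κ] (h : ι → κ) [Decidable (Function.Surjective h)]
    [DecidablePred fun S : Finset κ => ∀ t, h t ∈ Sᶜ] :
    ∑ S : Finset κ with ∀ t, h t ∈ Sᶜ, (-1 : ℤ) ^ S.card =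
      if Function.Surjective h then 1 else 0 := by
  have _ := Fintype.ofFinite ι
  have havoid (S : Finset κ) : (∀ t, h t ∈ Sᶜ) ↔ S ∈ (Finset.univ.image h)ᶜ.powerset := by
    rw [Finset.mem_powerset, Finset.subset_compl_comm]
    simp [Finset.subset_iff]
  have hsurj : (Finset.univ.image h)ᶜ = ∅ ↔ Function.Surjective h := by
    simp [Finset.eq_univ_iff_forall, Function.Surjective]
  simp only [havoid, Finset.filter_univ_mem, Finset.sum_powerset_neg_one_pow_card, hsurj]

lemma polarization_ofFn (w₀ : Fin D → X) (z : Fin D → A) (v : Fin k → X) :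
    polarization w₀ z (List.ofFn v) =
      ∑ h : Fin k → Fin D with w₀ ∘ h = v ∧ Function.Surjective h, (List.ofFn (z ∘ h)).prod := by
  simp only [polarization, mon_sum_filter, Finset.smul_sum]
  calc _ = ∑ h : Fin k → Fin D with w₀ ∘ h = v,
        (∑ S : Finset (Fin D) with ∀ t, h t ∈ Sᶜ, (-1 : ℤ) ^ S.card) •
          (List.ofFn (z ∘ h)).prod := by
        simp only [Finset.sum_smul]
        exact Finset.sum_comm' (by simp [and_comm])
    _ = _ := by
        simp only [sum_neg_one_pow_card_of_forall_mem_compl, ite_smul, one_smul, zero_smul]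
        rw [← Finset.sum_filter, Finset.filter_filter]

lemma polarization_of_length_lt (w₀ : Fin D → X) (z : Fin D → A) {v : List X}
    (hv : v.length < D) : polarization w₀ z v = 0 := by
  rw [← List.ofFn_get v, polarization_ofFn]
  refine Finset.sum_eq_zero fun h hh => absurd (Finset.mem_filter.1 hh).2.2 fun hsurj => ?_
  exact hv.not_ge (by simpa using Fintype.card_le_of_surjective h hsurj)

lemma polarization_ofFn_eq_sum_perm (w₀ : Fin D → X) (z : Fin D → A) (v : Fin D → X) :
    polarization w₀ z (List.ofFn v) =
      ∑ σ ∈ {σ : Equiv.Perm (Fin D) | w₀ ∘ σ = v}, (List.ofFn (z ∘ σ)).prod := by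
  rw [polarization_ofFn]
  refine (Finset.sum_of_injOn (fun σ : Equiv.Perm (Fin D) => ⇑σ) DFunLike.coe_injective.injOn
    ?_ ?_ fun _ _ => rfl).symm
  · intro σ hσ
    exact Finset.mem_filter.2 ⟨Finset.mem_univ _, (Finset.mem_filter.1 hσ).2, σ.surjective⟩
  · intro h hh hσ
    obtain ⟨-, hv, hsurj⟩ := Finset.mem_filter.1 hh
    refine absurd ⟨Equiv.ofBijective h (Finite.surjective_iff_bijective.1 hsurj), ?_, rfl⟩ hσ
    exact Finset.mem_filter.2 ⟨Finset.mem_univ _, hv⟩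

variable {C : Type*} [CommRing C] [Algebra C A]

lemma sum_smul_polarization_eq_zero (w₀ : Fin D → X) (z : Fin D → A) {f : List X →₀ C}
    (hf : ∀ a : X → A, Finsupp.linearCombination C (mon a) f = 0) :
    ∑ v ∈ f.support, f v • polarization w₀ z v = 0 := by
  simp only [Finsupp.linearCombination_apply, Finsupp.sum] at hf
  simp only [polarization, Finset.smul_sum]
  rw [Finset.sum_comm]
  refine Finset.sum_eq_zero fun S _ => ?_
  simp only [smul_comm (f _), ← Finset.smul_sum, hf, smul_zero]

omit [DecidableEq X] in
lemma multilinearIdentity_of_forall_linearCombination_eq_zero (w₀ : Fin D → X) {f : List X →₀ C}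
    (hf : ∀ a : X → A, Finsupp.linearCombination C (mon a) f = 0)
    (hlong : ∀ v, D < v.length → f v ∈ Module.annihilator C A) :
    MultilinearIdentity A fun σ : Equiv.Perm (Fin D) => f (List.ofFn (w₀ ∘ σ)) := by
  classical
  intro z
  have hpart (v : List X) : f v • polarization w₀ z v =
      ∑ σ ∈ {σ : Equiv.Perm (Fin D) | List.ofFn (w₀ ∘ σ) = v},
        f (List.ofFn (w₀ ∘ σ)) • (List.ofFn (z ∘ σ)).prod := by
    obtain ⟨k, v, rfl⟩ : ∃ (k : ℕ) (v' : Fin k → X), v = List.ofFn v' :=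
      ⟨_, v.get, (List.ofFn_get v).symm⟩
    obtain rfl | hk := eq_or_ne k D
    · rw [polarization_ofFn_eq_sum_perm, Finset.smul_sum]
      simp only [List.ofFn_injective.eq_iff]
      refine Finset.sum_congr rfl fun σ hσ => ?_
      rw [(Finset.mem_filter.1 hσ).2]
    · have hempty (σ : Equiv.Perm (Fin D)) : List.ofFn (w₀ ∘ σ) ≠ List.ofFn v :=
        fun h => hk (by simpa using congrArg List.length h.symm)
      rw [Finset.filter_false_of_mem fun σ _ => hempty σ, Finset.sum_empty]
      obtain hk | hk := hk.lt_or_gt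
      · rw [polarization_of_length_lt w₀ z (by simpa using hk), smul_zero]
      · exact Module.mem_annihilator.1 (hlong _ (by simpa using hk)) _
  have hsum := sum_smul_polarization_eq_zero w₀ z hf
  simp only [hpart] at hsum
  rw [Finset.sum_fiberwise_eq_sum_filter, Finset.sum_filter_of_ne] at hsum
  · exact hsum
  · intro σ _ hσ
    exact Finsupp.mem_support_iff.2 fun h => hσ (by rw [h, zero_smul])

omit [DecidableEq X] in
lemma exists_multilinearIdentity {𝔞 : Ideal C} (h𝔞 : 𝔞 ≤ Module.annihilator C A)
    {f : List X →₀ C} (hf : ∀ a : X → A, Finsupp.linearCombination C (mon a) f = 0)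
    (hne : ∃ w, f w ∉ 𝔞) :
    ∃ (D : ℕ) (c : Equiv.Perm (Fin D) → C), c 1 ∉ 𝔞 ∧ MultilinearIdentity A c := by
  classical
  have hsupp {w : List X} (hw : f w ∉ 𝔞) : w ∈ {w ∈ f.support | f w ∉ 𝔞} :=
    Finset.mem_filter.2 ⟨Finsupp.mem_support_iff.2 fun h => hw (h ▸ zero_mem _), hw⟩
  obtain ⟨w, hw, hmax⟩ := Finset.exists_max_image {w ∈ f.support | f w ∉ 𝔞} List.length
    (hne.imp fun _ => hsupp)
  refine ⟨w.length, fun σ => f (List.ofFn (w.get ∘ σ)), ?_,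
    multilinearIdentity_of_forall_linearCombination_eq_zero w.get hf fun v hv => h𝔞 ?_⟩
  · simpa using (Finset.mem_filter.1 hw).2
  · by_contra hfv
    exact hv.not_ge (hmax v (hsupp hfv))

end Multilinearization

/-! ### Codimension growth -/

section Codimension

lemma exists_coloring {ι α : Type*} [Finite ι] [LinearOrder ι] [LinearOrder α] {m : ℕ} {π : ι → α}
    (hinj : Function.Injective π) (h : ¬∃ p : Fin m → ι, StrictMono p ∧ StrictAnti (π ∘ p)) :
    ∃ c : ι → Fin m, ∀ a, StrictMonoOn π (c ⁻¹' {a}) := by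
  have _ := Fintype.ofFinite ι
  classical
  -- A position is coloured by the length of the longest decreasing subsequence ending there.
  let T (j : ι) : Finset (Finset ι) := {t | j ∈ t ∧ (∀ i ∈ t, i ≤ j) ∧ StrictAntiOn π t}
  have hT (j : ι) : (T j).Nonempty := ⟨{j}, by simp [T]⟩
  have hlt (j : ι) : (T j).sup Finset.card < m := by
    obtain ⟨t, ht, hcard⟩ := Finset.exists_mem_eq_sup _ (hT j) Finset.card
    rw [hcard]
    by_contra! hm
    let p := Finset.orderEmbOfCardLe t hm
    have hp (i : Fin m) : p i ∈ t := Finset.orderEmbOfCardLe_mem t hm i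
    exact h ⟨p, p.strictMono, fun i k hik =>
      (Finset.mem_filter.1 ht).2.2.2 (hp i) (hp k) (p.strictMono hik)⟩
  have hsup {j k : ι} (hjk : j < k) (hπ : π k < π j) :
      (T j).sup Finset.card < (T k).sup Finset.card := by
    obtain ⟨t, ht, hcard⟩ := Finset.exists_mem_eq_sup _ (hT j) Finset.card
    obtain ⟨-, hjt, hle, hanti⟩ := Finset.mem_filter.1 ht
    have hins : insert k t ∈ T k := by
      refine Finset.mem_filter.2 ⟨Finset.mem_univ _, Finset.mem_insert_self _ _, ?_, ?_⟩
      · simpa using fun i hi => (hle i hi).trans hjk.le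
      · rw [Finset.coe_insert,
          strictAntiOn_insert_iff_of_forall_le fun i hi => (hle i hi).trans hjk.le]
        exact ⟨fun i hi _ => hπ.trans_le (hanti.antitoneOn hi hjt (hle i hi)), hanti⟩
    have hk : k ∉ t := fun hk => hjk.not_ge (hle k hk)
    rw [hcard, ← Nat.add_one_le_iff, ← Finset.card_insert_of_notMem hk]
    exact Finset.le_sup (f := Finset.card) hins
  refine ⟨fun j => ⟨_, hlt j⟩, fun a j hj k hk hjk => ?_⟩
  by_contra! hπ
  have hcolour : (T j).sup Finset.card = (T k).sup Finset.card :=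
    Fin.val_eq_of_eq (Eq.trans hj (Eq.symm hk))
  exact (hsup hjk (hπ.lt_of_ne fun e => hjk.ne' (hinj e))).ne hcolour

section Perm

variable {n m : ℕ} {π π' : Equiv.Perm (Fin n)} {c : Fin n → Fin m}

lemma le_symm_apply_of_coloring (h : ∀ a, StrictMonoOn π (c ⁻¹' {a}))
    (h' : ∀ a, StrictMonoOn π' (c ⁻¹' {a})) (hc : c ∘ π.symm = c ∘ π'.symm) (j : Fin n) :
    j ≤ π'.symm (π j) := by
  have hsame (j : Fin n) : c (π'.symm (π j)) = c j := by simpa using (congrFun hc (π j)).symm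
  induction j using WellFoundedLT.induction with
  | _ j ih =>
    by_contra! hlt
    have hπ := h (c j) (hsame j) rfl hlt
    have hπ' := (h' (c j)).monotoneOn (hsame j) ((hsame _).trans (hsame j)) (ih _ hlt)
    simp only [Equiv.apply_symm_apply] at hπ'
    exact hπ.not_ge hπ'

lemma perm_eq_of_coloring (h : ∀ a, StrictMonoOn π (c ⁻¹' {a}))
    (h' : ∀ a, StrictMonoOn π' (c ⁻¹' {a})) (hc : c ∘ π.symm = c ∘ π'.symm) : π = π' := by
  ext j : 1
  have hle := le_symm_apply_of_coloring h' h hc.symm (π'.symm (π j))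
  rw [Equiv.apply_symm_apply, Equiv.symm_apply_apply] at hle
  exact ((Equiv.symm_apply_eq π').1 (hle.antisymm (le_symm_apply_of_coloring h h' hc j)))

end Perm

open Classical in
/-- The permutations of `n` letters whose word is not `m`-decomposable. -/
noncomputable def good (m n : ℕ) : Finset (Equiv.Perm (Fin n)) :=
  {π | ¬ Decomposable m (List.ofFn π)}

lemma mem_good {m n : ℕ} {π : Equiv.Perm (Fin n)} :
    π ∈ good m n ↔ ¬ Decomposable m (List.ofFn π) := by simp [good]

lemma exists_coloring_of_mem_good {m n : ℕ} {π : Equiv.Perm (Fin n)} (hπ : π ∈ good m n) :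
    ∃ c : Fin n → Fin m, ∀ a, StrictMonoOn π (c ⁻¹' {a}) := by
  refine exists_coloring π.injective ?_
  rintro ⟨p, hp, hanti⟩
  have hwindow (a : Fin n) : window (List.ofFn π) a 1 = [π a] := by
    rw [window, List.drop_eq_getElem_cons (by simp)]
    simp
  refine mem_good.1 hπ (decomposable_of_windows (h := 1) (fun i => p i) (fun i j hij => hp hij)
    (fun i => by simp) fun i j hij => ?_)
  rw [hwindow, hwindow]
  exact List.Lex.rel (hanti hij)

lemma card_good_le (m n : ℕ) : (good m n).card ≤ m ^ (2 * n) := by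
  choose c hc using fun π : good m n => exists_coloring_of_mem_good π.2
  have hinj : Function.Injective
      fun π : good m n => (c π, c π ∘ (π : Equiv.Perm (Fin n)).symm) := by
    intro π π' h
    obtain ⟨h₁, h₂⟩ := Prod.ext_iff.1 h
    dsimp only at h₁ h₂
    have hc' := hc π'
    rw [← h₁] at h₂ hc'
    exact Subtype.ext (perm_eq_of_coloring (hc π) hc' h₂)
  calc (good m n).card = Fintype.card (good m n) := (Fintype.card_coe _).symm
    _ ≤ Fintype.card ((Fin n → Fin m) × (Fin n → Fin m)) := Fintype.card_le_of_injective _ hinj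
    _ = m ^ (2 * n) := by simp [two_mul, pow_add]

lemma exists_card_good_sq_lt_factorial (m : ℕ) :
    ∃ d : ℕ, (good m (d + d)).card ^ 2 < d.factorial := by
  have hlim := FloorSemiring.tendsto_pow_div_factorial_atTop ((m : ℝ) ^ 8)
  obtain ⟨d, hd⟩ := (hlim.eventually (gt_mem_nhds one_pos)).exists
  rw [div_lt_one (by positivity)] at hd
  refine ⟨d, ?_⟩
  calc (good m (d + d)).card ^ 2 ≤ (m ^ (2 * (d + d))) ^ 2 :=
        Nat.pow_le_pow_left (card_good_le m (d + d)) 2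
    _ = (m ^ 8) ^ d := by ring
    _ < d.factorial := by exact_mod_cast hd

end Codimension

/-! ### Strong identities -/

section StrongIdentity

variable {C : Type*} [CommRing C] {A : Type*} [Ring A] [Algebra C A] {m n d : ℕ}

lemma exists_ofFn_eq {l : List (Fin n)} (hlen : l.length = n) (hmem : ∀ i, i ∈ l) :
    ∃ π : Equiv.Perm (Fin n), List.ofFn π = l := by
  obtain ⟨g, rfl⟩ : ∃ g : Fin n → Fin n, List.ofFn g = l :=
    ⟨fun j => l.get (j.cast hlen.symm), List.ext_getElem (by simp [hlen]) (by simp)⟩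
  have hsurj : Function.Surjective g := fun i => List.mem_ofFn.1 (hmem i)
  exact ⟨Equiv.ofBijective g (Finite.surjective_iff_bijective.1 hsurj), rfl⟩

lemma exists_ofFn_eq_of_perm {l : List (Fin n)} {π : Equiv.Perm (Fin n)}
    (hl : l.Perm (List.ofFn π)) : ∃ τ : Equiv.Perm (Fin n), List.ofFn τ = l :=
  exists_ofFn_eq (by simpa using hl.length_eq) fun i =>
    hl.mem_iff.2 ((List.mem_ofFn' _ _).2 (π.surjective i))

lemma exists_smul_mon_mem_span_good {𝔞 : Ideal C} [h𝔞 : 𝔞.IsPrime] {c : Equiv.Perm (Fin m) → C}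
    (hc1 : c 1 ∉ 𝔞) (hc : MultilinearIdentity A c) (r : Fin n → A) (π : Equiv.Perm (Fin n)) :
    ∃ s ∉ 𝔞, s • mon r (List.ofFn π) ∈
      Submodule.span C ((fun γ : Equiv.Perm (Fin n) => mon r (List.ofFn γ)) '' good m n) := by
  set W := Submodule.span C ((fun γ : Equiv.Perm (Fin n) => mon r (List.ofFn γ)) '' good m n)
  let W' := (Submodule.torsion' C (A ⧸ W) 𝔞.primeCompl).comap W.mkQ
  have hW' (a : A) : a ∈ W' ↔ ∃ s ∉ 𝔞, s • a ∈ W := by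
    simp only [W', Submodule.mem_comap, Submodule.mem_torsion'_iff, Subtype.exists,
      Submonoid.mk_smul, Submodule.mkQ_apply, ← Submodule.Quotient.mk_smul,
      Submodule.Quotient.mk_eq_zero, exists_prop, Ideal.mem_primeCompl_iff]
  rw [← hW']
  have hwf : WellFounded (InvImage (· < ·) fun π : Equiv.Perm (Fin n) => List.ofFn π) :=
    Finite.wellFounded_of_trans_of_irrefl _
  induction π using hwf.induction with
  | _ π ih =>
    by_cases hπ : π ∈ good m n
    · exact (hW' _).2 ⟨1, h𝔞.one_notMem, by
        rw [one_smul]; exact Submodule.subset_span ⟨π, hπ, rfl⟩⟩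
    · have hmem : c 1 • mon r (List.ofFn π) ∈ W' := by
        refine hc.smul_mon_mem r (not_not.1 (mem_good.not.1 hπ)) W' fun v hperm hlt => ?_
        obtain ⟨τ, rfl⟩ := exists_ofFn_eq_of_perm hperm
        exact ih τ hlt
      obtain ⟨s, hs, h⟩ := (hW' _).1 hmem
      exact (hW' _).2 ⟨s * c 1, h𝔞.mul_notMem hs hc1, by rwa [mul_smul]⟩

lemma MultilinearIdentity.pi {ι : Type*} {c : Equiv.Perm (Fin m) → C}
    (hc : MultilinearIdentity A c) : MultilinearIdentity (ι → A) c := by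
  intro x
  funext i
  simpa [Finset.sum_apply, Pi.list_prod_apply, Function.comp_def] using hc fun j => x j i

lemma mon_eval (w : List (Fin n)) (x : Fin n → A) :
    mon (fun i (x : Fin n → A) => x i) w x = mon x w := by
  simp [mon, Pi.list_prod_apply, Function.comp_def]

lemma exists_smul_mon_eq_sum_good {𝔞 : Ideal C} [h𝔞 : 𝔞.IsPrime] {c : Equiv.Perm (Fin m) → C}
    (hc1 : c 1 ∉ 𝔞) (hc : MultilinearIdentity A c) (n : ℕ) :
    ∃ s ∉ 𝔞, ∃ b : Equiv.Perm (Fin n) → Equiv.Perm (Fin n) → C,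
      ∀ (π : Equiv.Perm (Fin n)) (x : Fin n → A),
        s • mon x (List.ofFn π) = ∑ γ ∈ good m n, b π γ • mon x (List.ofFn γ) := by
  classical
  let X : Fin n → (Fin n → A) → A := fun i x => x i
  choose s hs hmem using fun π => exists_smul_mon_mem_span_good hc1 hc.pi X π
  have hprod (π : Equiv.Perm (Fin n)) : ∃ b : Equiv.Perm (Fin n) → C,
      ∑ γ ∈ good m n, b γ • mon X (List.ofFn γ) = (∏ τ, s τ) • mon X (List.ofFn π) := by
    rw [← Submodule.mem_span_image_finset_iff_exists_fun', ← Finset.prod_erase_mul _ _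
      (Finset.mem_univ π), mul_smul]
    exact Submodule.smul_mem _ _ (hmem π)
  choose b hb using hprod
  refine ⟨∏ τ, s τ, fun h => ?_, b, fun π x => ?_⟩
  · obtain ⟨τ, -, hτ⟩ := h𝔞.prod_mem_iff.1 h
    exact hs τ hτ
  · simpa [X, mon_eval] using (congrFun (hb π) x).symm

/-- The family `α` gives the identities `∑ α_ρ ∏ⱼ x_{ρ (π j)} yⱼ = 0` of `A`, for all `π`. -/
def StrongIdentity (A : Type*) [Ring A] [Algebra C A] (α : Equiv.Perm (Fin d) → C) : Prop :=
  ∀ (π : Equiv.Perm (Fin d)) (x y : Fin d → A),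
    ∑ ρ, α ρ • (List.ofFn fun j => x (ρ (π j)) * y j).prod = 0

/-- The permutation of the letters `x₀, …, y₀, …` that permutes the `x`-letters by `ρ`. -/
def permLeft (ρ : Equiv.Perm (Fin d)) : Equiv.Perm (Fin (d + d)) :=
  finSumFinEquiv.permCongr (Equiv.Perm.sumCongr ρ 1)

lemma append_comp_permLeft {α : Type*} (x y : Fin d → α) (ρ : Equiv.Perm (Fin d)) :
    Fin.append x y ∘ permLeft ρ = Fin.append (x ∘ ρ) y := by
  funext i
  refine Fin.addCases (fun i => ?_) (fun i => ?_) i <;>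
    simp [permLeft, -Fin.natAdd_eq_addNat]

lemma exists_mon_append_eq (π : Equiv.Perm (Fin d)) : ∃ τ : Equiv.Perm (Fin (d + d)),
    ∀ x y : Fin d → A,
      mon (Fin.append x y) (List.ofFn τ) = (List.ofFn fun j => x (π j) * y j).prod := by
  let l : List (Fin (d + d)) := (List.ofFn fun j => [Fin.castAdd d (π j), Fin.natAdd d j]).flatten
  obtain ⟨τ, hτ⟩ : ∃ τ : Equiv.Perm (Fin (d + d)), List.ofFn τ = l := by
    refine exists_ofFn_eq (by simp [l, List.length_flatten, Function.comp_def, mul_two]) fun i => ?_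
    simp only [l, List.mem_flatten, List.mem_ofFn]
    refine Fin.addCases (fun i => ?_) (fun i => ?_) i
    · exact ⟨_, ⟨π.symm i, rfl⟩, by simp⟩
    · exact ⟨_, ⟨i, rfl⟩, by simp⟩
  refine ⟨τ, fun x y => ?_⟩
  rw [hτ, mon_flatten_ofFn]
  simp [mon, -Fin.natAdd_eq_addNat]

lemma exists_sum_mul_mem_of_card_lt {ι κ : Type*} [Fintype ι] [Fintype κ] (𝔞 : Ideal C)
    [𝔞.IsPrime] (hcard : Fintype.card κ < Fintype.card ι) (M : ι → κ → C) :
    ∃ α : ι → C, (∃ i, α i ∉ 𝔞) ∧ ∀ k, ∑ i, α i * M i k ∈ 𝔞 := by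
  let V (i : ι) (k : κ) : C ⧸ 𝔞 := Ideal.Quotient.mk 𝔞 (M i k)
  have hdep : ¬ LinearIndependent (C ⧸ 𝔞) V := fun h =>
    hcard.not_ge (by simpa using h.fintype_card_le_finrank)
  obtain ⟨β, hβ, i, hi⟩ := Fintype.not_linearIndependent_iff.1 hdep
  obtain ⟨α, rfl⟩ := (Ideal.Quotient.mk_surjective (I := 𝔞)).comp_left β
  refine ⟨α, ⟨i, fun h => hi (Ideal.Quotient.eq_zero_iff_mem.2 h)⟩, fun k => ?_⟩
  rw [← Ideal.Quotient.eq_zero_iff_mem, map_sum]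
  simpa [V] using congrFun hβ k

/-- Regev's counting argument: there are more permutations of the `x`-letters than pairs of good
words. A word is reduced to good words `γ`, its letters are permuted, and it is reduced again. -/
lemma exists_strongIdentity {𝔞 : Ideal C} [h𝔞 : 𝔞.IsPrime] (hann : 𝔞 ≤ Module.annihilator C A)
    {c : Equiv.Perm (Fin m) → C} (hc1 : c 1 ∉ 𝔞) (hc : MultilinearIdentity A c) :
    ∃ (d : ℕ) (α : Equiv.Perm (Fin d) → C), StrongIdentity A α ∧ ∃ ρ, α ρ ∉ 𝔞 := by
  obtain ⟨d, hd⟩ := exists_card_good_sq_lt_factorial m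
  obtain ⟨s, hs, b, hb⟩ := exists_smul_mon_eq_sum_good hc1 hc (d + d)
  obtain ⟨α, ⟨ρ₀, hρ₀⟩, hα⟩ := exists_sum_mul_mem_of_card_lt 𝔞
    (ι := Equiv.Perm (Fin d)) (κ := good m (d + d) × good m (d + d))
    (by simpa [Fintype.card_perm, ← pow_two] using hd) fun ρ p => b (permLeft ρ * p.1) p.2
  have hreduce (τ : Equiv.Perm (Fin (d + d))) (x : Fin (d + d) → A) (ρ : Equiv.Perm (Fin d)) :
      (s * s) • mon (x ∘ permLeft ρ) (List.ofFn τ) =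
        ∑ γ ∈ good m (d + d), ∑ γ' ∈ good m (d + d),
          (b τ γ * b (permLeft ρ * γ) γ') • mon x (List.ofFn γ') := by
    have hmon (γ : Equiv.Perm (Fin (d + d))) :
        mon (x ∘ permLeft ρ) (List.ofFn γ) = mon x (List.ofFn ⇑(permLeft ρ * γ)) := by
      simp [mon, List.map_ofFn, Function.comp_def]
    rw [mul_smul, hb, Finset.smul_sum]
    refine Finset.sum_congr rfl fun γ _ => ?_
    rw [smul_comm, hmon, hb, Finset.smul_sum]
    simp only [mul_smul]
  refine ⟨d, fun ρ => s * s * α ρ, fun π x y => ?_, ρ₀, h𝔞.mul_notMem (h𝔞.mul_notMem hs hs) hρ₀⟩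
  obtain ⟨τ, hτ⟩ := exists_mon_append_eq (A := A) π
  calc ∑ ρ, (s * s * α ρ) • (List.ofFn fun j => x (ρ (π j)) * y j).prod
      = ∑ ρ, α ρ • (s * s) • mon (Fin.append x y ∘ permLeft ρ) (List.ofFn τ) := by
        simp only [append_comp_permLeft, hτ, Function.comp_apply, mul_smul, smul_comm s (α _)]
    _ = ∑ γ ∈ good m (d + d), ∑ γ' ∈ good m (d + d), b τ γ •
          (∑ ρ, α ρ * b (permLeft ρ * γ) γ') • mon (Fin.append x y) (List.ofFn γ') := by
        simp only [hreduce, Finset.smul_sum, Finset.sum_smul, smul_smul, mul_left_comm (α _)]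
        rw [Finset.sum_comm]
        exact Finset.sum_congr rfl fun γ _ => Finset.sum_comm
    _ = 0 := Finset.sum_eq_zero fun γ hγ => Finset.sum_eq_zero fun γ' hγ' => by
        rw [Module.mem_annihilator.1 (hann (hα (⟨γ, hγ⟩, ⟨γ', hγ'⟩))), smul_zero]

end StrongIdentity

/-! ### From strong identities to Capelli identities -/

section StrongIdeal

variable {C : Type*} [CommRing C] {A : Type*} [Ring A] [Algebra C A] {d n : ℕ}

variable (C A d) in
/-- The ideal of all coefficients of strong identities of `A` in `d` variables. Only the
coefficients of the identity permutation are recorded, since permuting the variables gives the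
others. -/
def strongIdeal : Ideal C where
  carrier := {c | ∃ α : Equiv.Perm (Fin d) → C, StrongIdentity A α ∧ α 1 = c}
  zero_mem' := ⟨0, fun π x y => by simp, rfl⟩
  add_mem' := by
    rintro _ _ ⟨α, hα, rfl⟩ ⟨β, hβ, rfl⟩
    exact ⟨α + β, fun π x y => by simp [add_smul, Finset.sum_add_distrib, hα π, hβ π], rfl⟩
  smul_mem' := by
    rintro c _ ⟨α, hα, rfl⟩
    exact ⟨c • α, fun π x y => by simp [mul_smul, ← Finset.smul_sum, hα π], rfl⟩

lemma StrongIdentity.mem_strongIdeal {α : Equiv.Perm (Fin d) → C} (hα : StrongIdentity A α)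
    (τ : Equiv.Perm (Fin d)) : α τ ∈ strongIdeal C A d := by
  refine ⟨fun ρ => α (ρ * τ), fun π x y => ?_, by simp⟩
  have h := Equiv.sum_comp (Equiv.mulRight τ)
    fun ρ => α ρ • (List.ofFn fun j => x (ρ ((τ⁻¹ * π) j)) * y j).prod
  rw [hα (τ⁻¹ * π) x y] at h
  simpa using h

/-- Only the order in which the marked letters `e k` occur in the word matters. -/
lemma exists_prod_map_extend_eq {ι κ : Type*} (e : κ ↪ ι) [DecidablePred (· ∈ Set.range e)]
    (P : κ → A) (X y : ι → A) (l : List ι) :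
    ∃ (m : ℕ) (b : A) (k : Fin m → κ) (z : Fin m → A),
      List.ofFn (e ∘ k) = l.filter (· ∈ Set.range e) ∧
      ∀ x : κ → A, (l.map fun i => Function.extend e (P * x) X i * y i).prod =
        b * (List.ofFn fun j => x (k j) * z j).prod := by
  induction l with
  | nil => exact ⟨0, 1, Fin.elim0, Fin.elim0, by simp⟩
  | cons i l ih =>
    obtain ⟨m, b, k, z, hk, hz⟩ := ih
    by_cases hi : i ∈ Set.range e
    · obtain ⟨κ₀, rfl⟩ := hi
      refine ⟨m + 1, P κ₀, Fin.cons κ₀ k, Fin.cons (y (e κ₀) * b) z, ?_, fun x => ?_⟩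
      · simpa [List.ofFn_succ, Function.comp_def] using hk
      · simp [List.ofFn_succ, hz, e.injective.extend_apply, mul_assoc]
    · refine ⟨m, X i * y i * b, k, z, by simpa [hi] using hk, fun x => ?_⟩
      rw [List.map_cons, List.prod_cons, hz, Function.extend_apply' _ _ _ hi, mul_assoc (X i * y i)]

lemma exists_ofFn_mul_extend_eq (e : Fin d ↪ Fin n) (P : Fin d → A) (X y : Fin n → A)
    (σ : Equiv.Perm (Fin n)) :
    ∃ (b : A) (π : Equiv.Perm (Fin d)) (z : Fin d → A), ∀ x : Fin d → A,
      (List.ofFn fun j => Function.extend e (P * x) X (σ j) * y j).prod =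
        b * (List.ofFn fun j => x (π j) * z j).prod := by
  classical
  obtain ⟨m, b, k, z, hk, hz⟩ :=
    exists_prod_map_extend_eq e P X (y ∘ σ.symm) (List.ofFn σ)
  have hinj : Function.Injective k := by
    refine .of_comp (f := e) (List.nodup_ofFn.1 ?_)
    rw [hk]
    exact (List.nodup_ofFn.2 σ.injective).filter _
  have hsurj : Function.Surjective k := fun i => by
    have hi : e i ∈ List.ofFn (e ∘ k) := by simp [hk, List.mem_filter, σ.surjective (e i)]
    simpa using hi
  obtain rfl : m = d := by simpa using Fintype.card_of_bijective ⟨hinj, hsurj⟩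
  refine ⟨b, .ofBijective k ⟨hinj, hsurj⟩, z, fun x => ?_⟩
  have h := hz x
  simp only [List.map_ofFn, Function.comp_def, Equiv.symm_apply_apply] at h
  exact h

lemma StrongIdentity.sum_smul_capelli {α : Equiv.Perm (Fin d) → C} (hα : StrongIdentity A α)
    (e : Fin d ↪ Fin n) (P Q : Fin d → A) (X y : Fin n → A) :
    ∑ ρ, α ρ • capelli y (Function.extend e (P * (Q ∘ ρ)) X) = 0 := by
  simp only [capelli, Finset.smul_sum]
  rw [Finset.sum_comm]
  refine Finset.sum_eq_zero fun σ _ => ?_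
  obtain ⟨b, π, z, hz⟩ := exists_ofFn_mul_extend_eq e P X y σ
  simp only [hz, smul_comm (α _), ← mul_smul_comm, ← Finset.smul_sum, ← Finset.mul_sum,
    Function.comp_apply, hα π Q z, mul_zero, smul_zero]

variable (C) in
/-- The Capelli polynomial as an alternating map of its variables `x`. -/
noncomputable def capelliAlternating (y : Fin n → A) : A [⋀^Fin n]→ₗ[C] A :=
  MultilinearMap.alternatization
    ((MultilinearMap.mkPiAlgebraFin C n A).compLinearMap fun j => LinearMap.mulRight C (y j))

lemma capelliAlternating_apply (y x : Fin n → A) : capelliAlternating C y x = capelli y x := by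
  rw [capelliAlternating, MultilinearMap.alternatization_apply, capelli]
  refine Finset.sum_congr rfl fun σ _ => ?_
  rw [Units.smul_def]
  simp [MultilinearMap.domDomCongr_apply, -zsmul_eq_mul]

lemma multilinear_eq_zero_of_span_eq_top {ι M N : Type*} [Finite ι] [AddCommGroup M] [Module C M]
    [AddCommGroup N] [Module C N] (f : MultilinearMap C (fun _ : ι => M) N) {S : Set M}
    (hS : Submodule.span C S = ⊤) (hf : ∀ x : ι → M, (∀ i, x i ∈ S) → f x = 0) : f = 0 := by
  classical
  have _ := Fintype.ofFinite ι
  suffices h : ∀ (T : Finset ι) (x : ι → M), (∀ i ∉ T, x i ∈ S) → f x = 0 from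
    MultilinearMap.ext fun x => h Finset.univ x (by simp)
  intro T
  induction T using Finset.induction_on with
  | empty => exact fun x hx => hf x fun i => hx i (Finset.notMem_empty i)
  | insert i T hi ih =>
    intro x hx
    have hzero : f.toLinearMap x i = 0 := LinearMap.ext_on hS fun a ha =>
      ih _ fun j hj => by
        obtain rfl | hji := eq_or_ne j i
        · simpa using ha
        · simpa [hji] using hx j (by simp [hji, hj])
    simpa using LinearMap.congr_fun hzero (x i)

end StrongIdeal

section Rearrangement

variable {d n : ℕ}

lemma sum_comp_extend {β : Type*} (e : Fin d ↪ Fin n) (g : Fin d → β) (w : Fin n → β)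
    (F : β → ℕ) : ∑ i, F (Function.extend e g w i) =
      ∑ k, F (g k) + ∑ i ∈ (Finset.univ.map e)ᶜ, F (w i) := by
  rw [← Finset.sum_add_sum_compl (Finset.univ.map e), Finset.sum_map]
  simp only [e.injective.extend_apply]
  refine congrArg _ (Finset.sum_congr rfl fun i hi => ?_)
  rw [Function.extend_apply' _ _ _ (by simpa using hi)]

lemma sum_add_sq_lt {p q : Fin d → ℕ} (hp : StrictMono p) (hq : StrictAnti q)
    {ρ : Equiv.Perm (Fin d)} (hρ : ρ ≠ 1) :
    ∑ k, (p k + q k) ^ 2 < ∑ k, (p k + q (ρ k)) ^ 2 := by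
  have hmul : ∑ k, p k * q k < ∑ k, p k * q (ρ k) := by
    have hanti : Antivary p q := fun i j hij => (hp (hq.lt_iff_gt.1 hij)).le
    refine hanti.sum_mul_lt_sum_mul_comp_perm_iff.2 fun h => hρ ?_
    have hmono : Monotone ρ := fun i j hij => by
      by_contra! hlt
      obtain rfl | hij := hij.eq_or_lt
      · exact lt_irrefl _ hlt
      · exact (h (hq hlt)).not_gt (hp hij)
    have hid : (hmono.strictMono_of_injective ρ.injective).orderIsoOfSurjective ρ ρ.surjective =
      OrderIso.refl _ := Subsingleton.elim _ _
    exact Equiv.ext fun k => DFunLike.congr_fun hid k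
  have hsq : ∑ k, q (ρ k) ^ 2 = ∑ k, q k ^ 2 := Equiv.sum_comp ρ fun k => q k ^ 2
  simp only [add_sq, Finset.sum_add_distrib, mul_assoc, ← Finset.mul_sum, hsq]
  omega

/-- The sum `∑_{i ≠ j} |w i| |w j|` over pairs of words, which decreases when the words are made
more unequal. -/
def spread {X : Type*} (w : Fin n → List X) : ℕ :=
  (∑ i, (w i).length) ^ 2 - ∑ i, (w i).length ^ 2

lemma spread_extend_lt {X : Type*} {w : Fin n → List X} {e : Fin d ↪ Fin n}
    {p q : Fin d → List X} (hw : ∀ k, w (e k) = p k ++ q k)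
    (hp : StrictMono fun k => (p k).length) (hq : StrictAnti fun k => (q k).length)
    {ρ : Equiv.Perm (Fin d)} (hρ : ρ ≠ 1) :
    spread (Function.extend e (fun k => p k ++ q (ρ k)) w) < spread w := by
  set w' := Function.extend e (fun k => p k ++ q (ρ k)) w
  have hsplit (F : List X → ℕ) :
      ∑ i, F (w i) = ∑ k, F (p k ++ q k) + ∑ i ∈ (Finset.univ.map e)ᶜ, F (w i) := by
    rw [← Finset.sum_add_sum_compl (Finset.univ.map e), Finset.sum_map]
    simp only [hw]
  have hsum : ∑ i, (w' i).length = ∑ i, (w i).length := by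
    rw [hsplit, sum_comp_extend]
    simp only [List.length_append, Finset.sum_add_distrib]
    rw [Equiv.sum_comp ρ fun k => (q k).length]
  have hsq : ∑ i, (w i).length ^ 2 < ∑ i, (w' i).length ^ 2 := by
    rw [hsplit (·.length ^ 2), sum_comp_extend e _ w (·.length ^ 2)]
    simpa only [List.length_append, add_lt_add_iff_right] using sum_add_sq_lt hp hq hρ
  have hle : ∑ i, (w' i).length ^ 2 ≤ (∑ i, (w' i).length) ^ 2 :=
    Finset.sum_sq_le_sq_sum_of_nonneg fun _ _ => Nat.zero_le _
  rw [hsum] at hle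
  rw [spread, spread, hsum]
  omega

lemma le_card_long_of_injective {X : Type*} [Finite X] {w : Fin n → List X}
    (hw : Function.Injective w) (hn : d + {u : List X | u.length < d}.ncard ≤ n) :
    d ≤ Fintype.card {i // d ≤ (w i).length} := by
  have hshort : Fintype.card {i // ¬ d ≤ (w i).length} ≤ {u : List X | u.length < d}.ncard := by
    have _ := (List.finite_length_lt X d).to_subtype
    rw [← Nat.card_eq_fintype_card, ← Nat.card_coe_set_eq]
    exact Nat.card_le_card_of_injective (fun i => ⟨w i, not_le.1 i.2⟩) fun i j hij =>
      Subtype.ext (hw (congrArg Subtype.val hij))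
  have hcard := Fintype.card_subtype_compl fun i => d ≤ (w i).length
  rw [Fintype.card_fin] at hcard
  omega

/-- The tails cut off have the lengths `d - 1, …, 0`, in the order of growing length of the
words. -/
lemma exists_strictMono_strictAnti_cut {X : Type*} {w : Fin n → List X}
    (hd : d ≤ Fintype.card {i // d ≤ (w i).length}) :
    ∃ (e : Fin d ↪ Fin n) (p q : Fin d → List X), (∀ k, w (e k) = p k ++ q k) ∧
      StrictMono (fun k => (p k).length) ∧ StrictAnti fun k => (q k).length := by
  obtain ⟨e₀⟩ : Nonempty (Fin d ↪ {i // d ≤ (w i).length}) :=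
    Function.Embedding.nonempty_of_card_le (by simpa using hd)
  let τ := Tuple.sort fun k => (w (e₀ k)).length
  let v (k : Fin d) : List X := w (e₀ (τ k))
  have hmono {i j : Fin d} (hij : i < j) : (v i).length ≤ (v j).length :=
    Tuple.monotone_sort (fun k => (w (e₀ k)).length) hij.le
  have hlong (k : Fin d) : d ≤ (v k).length := (e₀ (τ k)).2
  refine ⟨(τ.toEmbedding.trans e₀).trans (.subtype _),
    fun k => (v k).take ((v k).length - (d - 1 - k)),
    fun k => (v k).drop ((v k).length - (d - 1 - k)), fun k => (List.take_append_drop _ _).symm,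
    fun i j hij => ?_, fun i j hij => ?_⟩
  · have := hmono hij
    have := hlong i
    simp only [List.length_take]
    omega
  · have := hlong i
    have := hlong j
    simp only [List.length_drop]
    omega

end Rearrangement

section StrongCapelli

variable {C : Type*} [CommRing C] {A : Type*} [Ring A] [Algebra C A] {X : Type*} [Finite X]

/-- If two of the words coincide, then the Capelli polynomial vanishes. Otherwise `d` of them are
long, and a strong identity replaces the value by those with permuted tails. -/
lemma smul_capelli_mon_eq_zero (r : X → A) {d n : ℕ}
    (hn : d + {u : List X | u.length < d}.ncard ≤ n) (y : Fin n → A) (w : Fin n → List X) :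
    ∀ c ∈ strongIdeal C A d, c • capelli y (mon r ∘ w) = 0 := by
  induction w using (measure (spread (X := X) (n := n))).wf.induction with
  | _ w ih =>
  by_cases hw : Function.Injective w
  · obtain ⟨e, p, q, hpq, hp, hq⟩ :=
      exists_strictMono_strictAnti_cut (le_card_long_of_injective hw hn)
    rintro _ ⟨α, hα, rfl⟩
    let w' (ρ : Equiv.Perm (Fin d)) := Function.extend e (fun k => p k ++ q (ρ k)) w
    have hw' (ρ : Equiv.Perm (Fin d)) :
        Function.extend e (mon r ∘ p * (mon r ∘ q) ∘ ρ) (mon r ∘ w) = mon r ∘ w' ρ := by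
      funext i
      rw [Function.comp_apply, Function.apply_extend (mon r)]
      congr 1
      funext k
      simp
    have hone : w' 1 = w := by
      funext i
      by_cases hi : ∃ k, e k = i
      · obtain ⟨k, rfl⟩ := hi
        simp [w', e.injective.extend_apply, hpq]
      · exact Function.extend_apply' _ _ _ hi
    have hsum := hα.sum_smul_capelli e (mon r ∘ p) (mon r ∘ q) (mon r ∘ w) y
    simp only [hw'] at hsum
    have hzero (ρ : Equiv.Perm (Fin d)) (hρ : ρ ≠ 1) : α ρ • capelli y (mon r ∘ w' ρ) = 0 :=
      ih _ (spread_extend_lt hpq hp hq hρ) _ (hα.mem_strongIdeal ρ)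
    rwa [Fintype.sum_eq_single 1 hzero, hone] at hsum
  · intro c _
    obtain ⟨i, j, hij, hne⟩ : ∃ i j, w i = w j ∧ i ≠ j := by
      simpa [Function.Injective] using hw
    rw [← capelliAlternating_apply (C := C),
      (capelliAlternating C y).map_eq_zero_of_eq _ (congrArg (mon r) hij) hne, smul_zero]

lemma exists_smul_capelli_eq_zero {r : X → A} (hr : Algebra.adjoin C (Set.range r) = ⊤) (d : ℕ) :
    ∃ n : ℕ, ∀ c ∈ strongIdeal C A d, ∀ y x : Fin n → A, c • capelli y x = 0 := by
  refine ⟨d + {u : List X | u.length < d}.ncard, fun c hc y x => ?_⟩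
  have hzero : c • (capelliAlternating C y).toMultilinearMap = 0 := by
    refine multilinear_eq_zero_of_span_eq_top _ (span_range_mon hr) fun x hx => ?_
    choose w hw using hx
    obtain rfl : mon r ∘ w = x := funext hw
    simpa [capelliAlternating_apply] using smul_capelli_mon_eq_zero r le_rfl y w c hc
  simpa [capelliAlternating_apply] using DFunLike.congr_fun hzero x

end StrongCapelli

/-! ### Noetherian induction on the scalars -/

section ScalarIdeal

variable {C : Type*} [CommRing C] {A : Type*} [Ring A] [Algebra C A]

variable (A) in
/-- The two-sided ideal `𝔟A` of `A` generated by an ideal `𝔟` of scalars. -/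
def scalarIdeal (𝔟 : Ideal C) : Ideal A where
  __ := (𝔟 • ⊤ : Submodule C A)
  smul_mem' a _ h := Submodule.smul_top_le_comap_smul_top 𝔟 (LinearMap.mulLeft C a) h

instance scalarIdeal.isTwoSided (𝔟 : Ideal C) : (scalarIdeal A 𝔟).IsTwoSided :=
  ⟨fun a h => Submodule.smul_top_le_comap_smul_top 𝔟 (LinearMap.mulRight C a) h⟩

lemma mem_scalarIdeal {𝔟 : Ideal C} {a : A} :
    a ∈ scalarIdeal A 𝔟 ↔ a ∈ (𝔟 • ⊤ : Submodule C A) := Iff.rfl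

lemma smul_mem_scalarIdeal {𝔟 : Ideal C} {c : C} (hc : c ∈ 𝔟) (a : A) :
    c • a ∈ scalarIdeal A 𝔟 :=
  mem_scalarIdeal.2 (Submodule.smul_mem_smul hc Submodule.mem_top)

lemma le_annihilator_quotient_scalarIdeal (𝔟 : Ideal C) :
    𝔟 ≤ Module.annihilator C (A ⧸ scalarIdeal A 𝔟) := by
  refine fun c hc => Module.mem_annihilator.2 fun a => ?_
  obtain ⟨a, rfl⟩ := Ideal.Quotient.mkₐ_surjective C _ a
  rw [← map_smul]
  exact Ideal.Quotient.eq_zero_iff_mem.2 (smul_mem_scalarIdeal hc a)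

variable (A) in
/-- The two-sided ideal of the elements of `A` killed by all scalars in `𝔠`. -/
def scalarAnnihilator (𝔠 : Ideal C) : Ideal A where
  __ := Submodule.torsionBySet C A 𝔠
  smul_mem' a z hz := (Submodule.mem_torsionBySet_iff _ _).2 fun c => by
    rw [smul_eq_mul, ← mul_smul_comm, (Submodule.mem_torsionBySet_iff _ _).1 hz c, mul_zero]

lemma mem_scalarAnnihilator {𝔠 : Ideal C} {a : A} :
    a ∈ scalarAnnihilator A 𝔠 ↔ ∀ c ∈ 𝔠, c • a = 0 :=
  (Submodule.mem_torsionBySet_iff _ _).trans Subtype.forall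

instance scalarAnnihilator.isTwoSided (𝔠 : Ideal C) : (scalarAnnihilator A 𝔠).IsTwoSided :=
  ⟨fun b h => mem_scalarAnnihilator.2 fun c hc => by
    rw [← smul_mul_assoc, mem_scalarAnnihilator.1 h c hc, zero_mul]⟩

lemma scalarIdeal_mul_scalarAnnihilator (𝔟 : Ideal C) :
    (scalarIdeal A 𝔟 : Set A) * (scalarAnnihilator A 𝔟 : Set A) ⊆ {0} := by
  rintro _ ⟨u, hu, v, hv, rfl⟩
  have hle : (𝔟 • ⊤ : Submodule C A) ≤ (LinearMap.mulRight C v).ker :=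
    Submodule.smul_le.2 fun c hc a _ => by
      simp [← mul_smul_comm, mem_scalarAnnihilator.1 hv c hc]
  exact hle hu

lemma scalarIdeal_le_scalarAnnihilator {𝔟 𝔠 : Ideal C} (h : 𝔟 * 𝔠 ≤ Module.annihilator C A) :
    scalarIdeal A 𝔠 ≤ scalarAnnihilator A 𝔟 := by
  have hle : (𝔠 • ⊤ : Submodule C A) ≤ Submodule.torsionBySet C A 𝔟 :=
    Submodule.smul_le.2 fun c hc a _ => (Submodule.mem_torsionBySet_iff _ _).2 fun b => by
      rw [smul_smul, Module.mem_annihilator.1 (h (Ideal.mul_mem_mul b.2 hc))]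
  exact hle

lemma UniformlyNilpotent.exists_pow_subset {I : Ideal A} [I.IsTwoSided]
    (h : UniformlyNilpotent (A ⧸ I)) : ∃ q : ℕ, stronglyNilpotents A ^ q ⊆ I := by
  obtain ⟨q, hq⟩ := h.exists_pow_subset_preimage (f := Ideal.Quotient.mk I)
    Ideal.Quotient.mk_surjective
  exact ⟨q, fun a ha => Ideal.Quotient.eq_zero_iff_mem.1 (hq ha)⟩

end ScalarIdeal

section RelativelyFree

variable {C : Type*} [CommRing C] {X : Type*}

/-- `A` is relatively free on the generators `r`: every relation between the generators is an
identity of `A`. -/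
structure RelativelyFree (C : Type*) [CommRing C] {A : Type*} [Ring A] [Algebra C A]
    (r : X → A) : Prop where
  adjoin_eq_top : Algebra.adjoin C (Set.range r) = ⊤
  linearCombination_eq_zero : ∀ f : List X →₀ C, Finsupp.linearCombination C (mon r) f = 0 →
    ∀ a : X → A, Finsupp.linearCombination C (mon a) f = 0

variable {A B : Type*} [Ring A] [Algebra C A] [Ring B] [Algebra C B] {r : X → A}

lemma adjoin_range_comp_eq_top (hr : Algebra.adjoin C (Set.range r) = ⊤) {θ : A →ₐ[C] B}
    (hθ : Function.Surjective θ) : Algebra.adjoin C (Set.range (θ ∘ r)) = ⊤ := by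
  rw [Set.range_comp, ← AlgHom.map_adjoin, hr, Algebra.map_top, AlgHom.range_eq_top]
  exact hθ

lemma map_linearCombination_mon (θ : A →ₐ[C] B) (a : X → A) (f : List X →₀ C) :
    θ (Finsupp.linearCombination C (mon a) f) = Finsupp.linearCombination C (mon (θ ∘ a)) f := by
  rw [← AlgHom.toLinearMap_apply, LinearMap.map_finsupp_linearCombination]
  congr 2
  funext w
  simp [mon, map_list_prod]

lemma linearCombination_mem_scalarIdeal {𝔟 : Ideal C} {f : List X →₀ C} (hf : ∀ w, f w ∈ 𝔟)
    (a : X → A) : Finsupp.linearCombination C (mon a) f ∈ scalarIdeal A 𝔟 :=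
  Submodule.sum_mem _ fun w _ => smul_mem_scalarIdeal (hf w) _

/-- A relation modulo `𝔟A` becomes a relation of `A` after changing its coefficients modulo `𝔟`. -/
lemma RelativelyFree.quotient (h : RelativelyFree C r) (𝔟 : Ideal C) :
    RelativelyFree C (Ideal.Quotient.mkₐ C (scalarIdeal A 𝔟) ∘ r) := by
  have hsurj := Ideal.Quotient.mkₐ_surjective C (scalarIdeal A 𝔟)
  refine ⟨adjoin_range_comp_eq_top h.adjoin_eq_top hsurj, fun f hf a => ?_⟩
  obtain ⟨a, rfl⟩ := hsurj.comp_left a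
  have hmem : Finsupp.linearCombination C (mon r) f ∈ (𝔟 • ⊤ : Submodule C A) :=
    Ideal.Quotient.eq_zero_iff_mem.1 ((map_linearCombination_mon _ r f).trans hf)
  rw [← span_range_mon h.adjoin_eq_top, Submodule.mem_ideal_smul_span_iff_exists_sum] at hmem
  obtain ⟨g, hg, hgf⟩ := hmem
  have hsub := h.linearCombination_eq_zero (f - g) (by
    rw [map_sub, sub_eq_zero, ← hgf, Finsupp.linearCombination_apply]) a
  rw [map_sub, sub_eq_zero] at hsub
  rw [← map_linearCombination_mon, hsub]
  exact Ideal.Quotient.eq_zero_iff_mem.2 (linearCombination_mem_scalarIdeal hg a)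

lemma relativelyFree_of_ker (π : FreeAlgebra C X →ₐ[C] A) (hsurj : Function.Surjective π)
    (hker : ∀ (φ : FreeAlgebra C X →ₐ[C] FreeAlgebra C X) (x : FreeAlgebra C X),
      π x = 0 → π (φ x) = 0) : RelativelyFree C (π ∘ FreeAlgebra.ι C) := by
  refine ⟨adjoin_range_comp_eq_top (FreeAlgebra.adjoin_range_ι C X) hsurj, fun f hf a => ?_⟩
  obtain ⟨b, rfl⟩ := hsurj.comp_left a
  rw [← map_linearCombination_mon] at hf
  have hb : ⇑(FreeAlgebra.lift C b) ∘ FreeAlgebra.ι C = b := FreeAlgebra.ι_comp_lift b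
  simpa only [map_linearCombination_mon, hb] using hker (FreeAlgebra.lift C b) _ hf

/-- Without nontrivial relations modulo the prime `𝔞`, the algebra is free over the domain
`C ⧸ 𝔞`. -/
lemma isReduced_of_forall_mem {𝔞 : Ideal C} [𝔞.IsPrime] (h𝔞 : 𝔞 ≤ Module.annihilator C A)
    (hr : Algebra.adjoin C (Set.range r) = ⊤)
    (h : ∀ f : List X →₀ C, Finsupp.linearCombination C (mon r) f = 0 → ∀ w, f w ∈ 𝔞) :
    IsReduced A := by
  let Φ := MonoidAlgebra.lift C A (FreeMonoid X) (FreeMonoid.lift r)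
  let κ := MonoidAlgebra.mapRingHom (FreeMonoid X) (Ideal.Quotient.mk 𝔞)
  have hΦ (f : List X →₀ C) :
      Φ (MonoidAlgebra.ofCoeff f) = Finsupp.linearCombination C (mon r) f := by
    rw [MonoidAlgebra.lift_apply]
    exact Finsupp.sum_congr fun w _ => by rw [FreeMonoid.lift_apply]; rfl
  have hκ (F : MonoidAlgebra C (FreeMonoid X)) : κ F = 0 ↔ ∀ w, F.coeff w ∈ 𝔞 := by
    simp [κ, MonoidAlgebra.ext_iff, DFunLike.ext_iff, Ideal.Quotient.eq_zero_iff_mem]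
  refine ⟨fun z ⟨k, hk⟩ => ?_⟩
  obtain ⟨f, rfl⟩ : z ∈ (Finsupp.linearCombination C (mon r)).range := by
    rw [Finsupp.range_linearCombination, span_range_mon hr]
    exact Submodule.mem_top
  have hpow : κ (MonoidAlgebra.ofCoeff f) ^ k = 0 := by
    rw [← map_pow, hκ]
    exact h _ ((hΦ _).symm.trans ((map_pow Φ _ k).trans (by rw [hΦ, hk])))
  have hcoeff := (hκ _).1 (IsReduced.eq_zero _ ⟨k, hpow⟩)
  exact Finset.sum_eq_zero fun w _ => Module.mem_annihilator.1 (h𝔞 (hcoeff w)) _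

end RelativelyFree

section NoetherianInduction

variable {C : Type*} [CommRing C] {A : Type*} [Ring A] [Algebra C A] {X : Type*}

lemma UniformlyNilpotent.of_isReduced [IsReduced A] : UniformlyNilpotent A := by
  refine ⟨1, ?_⟩
  rw [pow_one]
  rintro z ⟨k, hk⟩
  have hz : z ∈ (Set.univ * {z} * Set.univ : Set A) :=
    ⟨z, ⟨1, Set.mem_univ _, z, rfl, one_mul z⟩, 1, Set.mem_univ _, mul_one z⟩
  exact IsReduced.eq_zero z ⟨k, hk (Set.pow_mem_pow hz)⟩

lemma uniformlyNilpotent_of_not_isPrime {𝔞 : Ideal C} (h𝔞 : 𝔞 ≤ Module.annihilator C A)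
    (hprime : ¬ 𝔞.IsPrime) (ih : ∀ 𝔟 > 𝔞, UniformlyNilpotent (A ⧸ scalarIdeal A 𝔟)) :
    UniformlyNilpotent A := by
  obtain rfl | ⟨x, hx, y, hy, hxy⟩ := Ideal.not_isPrime_iff.1 hprime
  · have : Subsingleton A := ⟨fun a b => by
      rw [← one_smul C a, ← one_smul C b]
      simp only [Module.mem_annihilator.1 (h𝔞 (Submodule.mem_top (x := 1)))]⟩
    exact .of_subsingleton
  · have hlt {x : C} (hx : x ∉ 𝔞) : 𝔞 < 𝔞 ⊔ Ideal.span {x} :=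
      left_lt_sup.2 fun h => hx (h (Ideal.mem_span_singleton_self x))
    have hmul : (𝔞 ⊔ Ideal.span {x}) * (𝔞 ⊔ Ideal.span {y}) ≤ 𝔞 := by
      rw [Ideal.mul_sup, Ideal.sup_mul _ _ (Ideal.span {y}),
        Ideal.span_singleton_mul_span_singleton]
      refine sup_le Ideal.mul_le_right (sup_le Ideal.mul_le_left ?_)
      exact (Ideal.span_singleton_le_iff_mem 𝔞).2 hxy
    refine .of_mul_subset (scalarIdeal_mul_scalarAnnihilator _) (ih _ (hlt hx)).exists_pow_subset
      ((ih _ (hlt hy)).exists_pow_subset.imp fun q hq => hq.trans ?_)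
    exact scalarIdeal_le_scalarAnnihilator (hmul.trans h𝔞)

lemma uniformlyNilpotent_of_strongIdentity [IsNoetherianRing C] [Finite X] {r : X → A}
    (hr : Algebra.adjoin C (Set.range r) = ⊤) {𝔞 : Ideal C} (h𝔞 : 𝔞 ≤ Module.annihilator C A)
    {d : ℕ} {α : Equiv.Perm (Fin d) → C} (hα : StrongIdentity A α) {ρ : Equiv.Perm (Fin d)}
    (hρ : α ρ ∉ 𝔞) (ih : ∀ 𝔟 > 𝔞, UniformlyNilpotent (A ⧸ scalarIdeal A 𝔟)) :
    UniformlyNilpotent A := by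
  obtain ⟨n, hn⟩ := exists_smul_capelli_eq_zero hr d
  set 𝔟 := 𝔞 ⊔ strongIdeal C A d
  have hlt : 𝔞 < 𝔟 := left_lt_sup.2 fun h => hρ (h (hα.mem_strongIdeal ρ))
  have hcapelli : CapelliIdentity (A ⧸ scalarAnnihilator A 𝔟) n := by
    intro y x
    obtain ⟨y, rfl⟩ := Ideal.Quotient.mk_surjective.comp_left y
    obtain ⟨x, rfl⟩ := Ideal.Quotient.mk_surjective.comp_left x
    rw [← map_capelli, Ideal.Quotient.eq_zero_iff_mem, mem_scalarAnnihilator]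
    intro c hc
    obtain ⟨s, hs, t, ht, rfl⟩ := Submodule.mem_sup.1 hc
    rw [add_smul, Module.mem_annihilator.1 (h𝔞 hs), hn t ht, add_zero]
  have _ : Algebra.FiniteType C A := ⟨by
    rw [← hr]
    exact Subalgebra.fg_def.2 ⟨_, Set.finite_range r, rfl⟩⟩
  have _ : Algebra.FiniteType C (A ⧸ scalarAnnihilator A 𝔟) :=
    .of_surjective (Ideal.Quotient.mkₐ C _) Ideal.Quotient.mk_surjective
  exact .of_mul_subset (scalarIdeal_mul_scalarAnnihilator 𝔟) (ih 𝔟 hlt).exists_pow_subset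
    (hcapelli.uniformlyNilpotent C).exists_pow_subset

/-- Noetherian induction on an ideal `𝔞` of scalars annihilating the algebra. -/
theorem RelativelyFree.uniformlyNilpotent [IsNoetherianRing C] [Finite X] {r : X → A}
    (h : RelativelyFree C r) : UniformlyNilpotent A := by
  have h𝔞 : (⊥ : Ideal C) ≤ Module.annihilator C A := bot_le
  generalize (⊥ : Ideal C) = 𝔞 at h𝔞
  induction 𝔞 using WellFoundedGT.induction generalizing A with
  | _ 𝔞 ih =>
  replace ih (𝔟 : Ideal C) (h𝔟 : 𝔟 > 𝔞) : UniformlyNilpotent (A ⧸ scalarIdeal A 𝔟) :=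
    ih 𝔟 h𝔟 (h.quotient 𝔟) (le_annihilator_quotient_scalarIdeal 𝔟)
  by_cases hprime : 𝔞.IsPrime
  swap
  · exact uniformlyNilpotent_of_not_isPrime h𝔞 hprime ih
  by_cases hfree : ∀ f, Finsupp.linearCombination C (mon r) f = 0 → ∀ w, f w ∈ 𝔞
  · have _ := isReduced_of_forall_mem h𝔞 h.adjoin_eq_top hfree
    exact .of_isReduced
  · push Not at hfree
    obtain ⟨f, hf, hne⟩ := hfree
    obtain ⟨m, c, hc1, hc⟩ := exists_multilinearIdentity h𝔞 (h.linearCombination_eq_zero f hf) hne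
    obtain ⟨d, α, hα, ρ, hρ⟩ := exists_strongIdentity h𝔞 hc1 hc
    exact uniformlyNilpotent_of_strongIdentity h.adjoin_eq_top h𝔞 hα hρ ih

end NoetherianInduction

lemma isTIdeal_sSup {C A : Type*} [CommSemiring C] [Ring A] [Algebra C A]
    {𝒩 : Set (TwoSidedIdeal A)} (h𝒩 : ∀ N ∈ 𝒩, IsTIdeal C A N) : IsTIdeal C A (sSup 𝒩) := by
  intro φ
  have hle : sSup 𝒩 ≤ (sSup 𝒩).comap φ := sSup_le fun N hN x hx =>
    (TwoSidedIdeal.mem_comap φ).2 (le_sSup hN (h𝒩 N hN φ x hx))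
  exact fun x hx => (TwoSidedIdeal.mem_comap φ).1 (hle hx)

end RelFree

/-- Let `A` be the relatively free affine algebra `FreeAlgebra C (Fin ℓ) / I` for a T-ideal
`I` over a commutative Noetherian ring `C`; here `A` is presented as a `C`-algebra together
with a surjective `C`-algebra homomorphism `π` from the free algebra whose kernel (the
T-ideal `I`) is stable under all endomorphisms of the free algebra.  Then `A` has a unique
maximal nilpotent T-ideal: a nilpotent T-ideal `N` containing every nilpotent T-ideal. -/
theorem stmt18 (C : Type*) [CommRing C] [IsNoetherianRing C] (ℓ : ℕ)
    (A : Type*) [Ring A] [Algebra C A]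
    (π : FreeAlgebra C (Fin ℓ) →ₐ[C] A) (hsurj : Function.Surjective π)
    (hker : ∀ (φ : FreeAlgebra C (Fin ℓ) →ₐ[C] FreeAlgebra C (Fin ℓ))
      (x : FreeAlgebra C (Fin ℓ)), π x = 0 → π (φ x) = 0) :
    ∃ N : TwoSidedIdeal A, IsTIdeal C A N ∧ IsNilpotentTwoSidedIdeal N ∧
      ∀ N' : TwoSidedIdeal A, IsTIdeal C A N' → IsNilpotentTwoSidedIdeal N' → N' ≤ N := by
  have hA : RelFree.UniformlyNilpotent A :=
    (RelFree.relativelyFree_of_ker π hsurj hker).uniformlyNilpotent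
  refine ⟨sSup {N | IsTIdeal C A N ∧ IsNilpotentTwoSidedIdeal N}, ?_, ?_,
    fun N hT hN => le_sSup ⟨hT, hN⟩⟩
  · exact RelFree.isTIdeal_sSup fun N hN => hN.1
  · exact hA.isNilpotentTwoSidedIdeal_sSup fun N hN => hN.2
end
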